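/- arXiv:1402.4690 — 13 statements merged into one kernel-verified Lean document; each statement's English description precedes it below -/
import Mathlib

section
/- Let Ω ⊆ ℝⁿ be nonempty, m : ℝⁿ → ℝᵏ and H : ℝⁿ → ℝ, and let I = [0,1]. Define the obstacle R(x) = sup { H(y) : y ∈ Ω, m(y) = x } for x ∈ m(Ω). Suppose the image m(Ω) is a convex set and R is real-valued and concave on m(Ω). Then the Bellman function B(x) = sup { ⟨H∘φ⟩_I : φ simple valued in Ω, ⟨m∘φ⟩_I = x } satisfies B(x) = R(x) for all x ∈ m(Ω). -/
open MeasureTheory Set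

/-! The average of `(m ∘ φ, H ∘ φ)` over a simple function `φ` with values in `Ω` is a finite convex
combination of points `(m y, H y)` with `y ∈ Ω`. All of these lie in the hypograph of `R`, which is
convex because `R` is concave, so the average `(x, r)` lies there too (the hypograph need not be
closed, since the combination is finite), that is, `r ≤ R x`. Conversely, the constant functions
already realize every value `H y` with `m y = x`. -/

section Integral

variable {X E : Type*} [MeasurableSpace X] {μ : Measure X} [IsProbabilityMeasure μ]
  [NormedAddCommGroup E] [NormedSpace ℝ E] [CompleteSpace E] {s : Set E}

theorem integral_simpleFunc_mem_of_convex (hs : Convex ℝ s) (ψ : SimpleFunc X E)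
    (hψ : ∀ t, ψ t ∈ s) : ∫ t, ψ t ∂μ ∈ s := by
  have weights_sum : ∑ y ∈ ψ.range, μ.real (ψ ⁻¹' {y}) = 1 := by
    rw [sum_measureReal_preimage_singleton _ fun y _ ↦ ψ.measurableSet_fiber y,
      ψ.coe_range, preimage_range, probReal_univ]
  rw [ψ.integral_eq_sum ψ.integrable_of_isFiniteMeasure]
  exact hs.sum_mem (fun _ _ ↦ measureReal_nonneg) weights_sum
    (SimpleFunc.forall_mem_range.2 hψ)

theorem integral_simpleFunc_le_of_concaveOn {f : E → ℝ} (hf : ConcaveOn ℝ s f)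
    (ψ : SimpleFunc X E) (η : SimpleFunc X ℝ) (hψ : ∀ t, ψ t ∈ s) (hη : ∀ t, η t ≤ f (ψ t)) :
    ∫ t, η t ∂μ ≤ f (∫ t, ψ t ∂μ) := by
  have mem_hypograph := integral_simpleFunc_mem_of_convex (μ := μ) hf.convex_hypograph
    (ψ.pair η) fun t ↦ ⟨hψ t, hη t⟩
  have integral_eq : ∫ t, ψ.pair η t ∂μ = (∫ t, ψ t ∂μ, ∫ t, η t ∂μ) :=
    integral_pair ψ.integrable_of_isFiniteMeasure η.integrable_of_isFiniteMeasure
  rw [integral_eq] at mem_hypograph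
  exact mem_hypograph.2

end Integral

section Bellman

/-- The values whose supremum is the obstacle at `x`. Keeping the set instead of its `sSup` lets
`IsLUB` express that the obstacle is finite at `x`. -/
def obstacleValues {α E : Type*} (Ω : Set α) (m : α → E) (H : α → ℝ) (x : E) : Set ℝ :=
  {r | ∃ y ∈ Ω, m y = x ∧ H y = r}

theorem obstacleValues_nonempty {α E : Type*} {Ω : Set α} {m : α → E} {x : E}
    (hx : x ∈ m '' Ω) (H : α → ℝ) : (obstacleValues Ω m H x).Nonempty :=
  let ⟨y, hy, hyx⟩ := hx
  ⟨H y, y, hy, hyx, rfl⟩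

variable {X α E : Type*} [MeasurableSpace X] [MeasurableSpace α]
  [NormedAddCommGroup E] [NormedSpace ℝ E]

/-- The values whose supremum is the Bellman function at `x`, for averages with respect to `μ`.
Simple functions are encoded as measurable functions with finite range. -/
def bellmanValues (μ : Measure X) (Ω : Set α) (m : α → E) (H : α → ℝ) (x : E) : Set ℝ :=
  {r | ∃ φ : X → α, Measurable φ ∧ (range φ).Finite ∧ (∀ t, φ t ∈ Ω) ∧
    (∫ t, m (φ t) ∂μ) = x ∧ (∫ t, H (φ t) ∂μ) = r}

variable [CompleteSpace E] (μ : Measure X) [IsProbabilityMeasure μ]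
  {Ω : Set α} {m : α → E} {H : α → ℝ} {R : E → ℝ} {x : E}

theorem obstacleValues_subset_bellmanValues :
    obstacleValues Ω m H x ⊆ bellmanValues μ Ω m H x := by
  rintro _ ⟨y, hy, rfl, rfl⟩
  exact ⟨fun _ ↦ y, measurable_const, finite_range_const, fun _ ↦ hy, by simp, by simp⟩

variable [MeasurableSingletonClass α]

theorem mem_upperBounds_bellmanValues_of_concaveOn {s : Set E} (hR : ConcaveOn ℝ s R)
    (hm : MapsTo m Ω s) (hH : ∀ y ∈ Ω, H y ≤ R (m y)) :
    R x ∈ upperBounds (bellmanValues μ Ω m H x) := by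
  rintro _ ⟨φ, hφ, hfin, hφΩ, rfl, rfl⟩
  let φₛ : SimpleFunc X α := ⟨φ, fun y ↦ hφ (measurableSet_singleton y), hfin⟩
  exact integral_simpleFunc_le_of_concaveOn hR (φₛ.map m) (φₛ.map H)
    (fun t ↦ hm (hφΩ t)) fun t ↦ hH _ (hφΩ t)

theorem bellman_eq_obstacle_general (hR : ∀ x ∈ m '' Ω, IsLUB (obstacleValues Ω m H x) (R x))
    (hconc : ConcaveOn ℝ (m '' Ω) R) (hx : x ∈ m '' Ω) :
    IsLUB (bellmanValues μ Ω m H x) (R x) := by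
  have le_R : ∀ y ∈ Ω, H y ≤ R (m y) := fun y hy ↦
    (hR (m y) (mem_image_of_mem m hy)).1 ⟨y, hy, rfl, rfl⟩
  exact ⟨mem_upperBounds_bellmanValues_of_concaveOn μ hconc (mapsTo_image m Ω) le_R,
    fun _ hb ↦ (hR x hx).2 (upperBounds_mono_set (obstacleValues_subset_bellmanValues μ) hb)⟩

end Bellman

/-- If the image `m(Ω)` is convex and the obstacle `R(x) = sup {H y : y ∈ Ω, m y = x}`
is real-valued and concave on `m(Ω)`, then the Bellman function coincides with the
obstacle on `m(Ω)`. -/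
theorem bellman_eq_obstacle {n k : ℕ} (Ω : Set (Fin n → ℝ)) (hΩ : Ω.Nonempty)
    (m : (Fin n → ℝ) → (Fin k → ℝ)) (H : (Fin n → ℝ) → ℝ)
    (R : (Fin k → ℝ) → ℝ)
    (hR : ∀ x, R x = sSup {r : ℝ | ∃ y ∈ Ω, m y = x ∧ H y = r})
    (hconv : Convex ℝ (m '' Ω))
    (hRbdd : ∀ x ∈ m '' Ω, BddAbove {r : ℝ | ∃ y ∈ Ω, m y = x ∧ H y = r})
    (hRconc : ConcaveOn ℝ (m '' Ω) R) :
    ∀ x ∈ m '' Ω,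
      sSup {r : ℝ | ∃ φ : ℝ → (Fin n → ℝ), Measurable φ ∧ (Set.range φ).Finite ∧
          (∀ t, φ t ∈ Ω) ∧ (∫ t in Icc (0:ℝ) 1, m (φ t)) = x ∧
          (∫ t in Icc (0:ℝ) 1, H (φ t)) = r} = R x := by
  intro x hx
  have : IsProbabilityMeasure (volume.restrict (Icc (0 : ℝ) 1)) := ⟨by simp⟩
  have isLUB_bellman := bellman_eq_obstacle_general (volume.restrict (Icc (0 : ℝ) 1))
    (fun x hx ↦ hR x ▸ isLUB_csSup (obstacleValues_nonempty hx H) (hRbdd x hx)) hRconc hx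
  exact isLUB_bellman.csSup_eq isLUB_bellman.nonempty
end

section
/- Let p ≥ 1 be a real number and define m : ℝ² → ℝ³ by m(x,y) = (|x|^p, |y|^p, |x−y|^p). Then the convex hull of the image m(ℝ²) equals the set Λ = { (x₁,x₂,x₃) ∈ ℝ³ : x₁, x₂, x₃ ≥ 0, x₁^{1/p} + x₂^{1/p} ≥ x₃^{1/p}, x₂^{1/p} + x₃^{1/p} ≥ x₁^{1/p}, x₃^{1/p} + x₁^{1/p} ≥ x₂^{1/p} }. -/
/-!
By Minkowski's inequality, the triangle inequality between `p`-th roots is preserved under sums, so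
`Λ` is a convex cone; it contains the image of `m` by the usual triangle inequality. Conversely, if
`A`, `B`, `C` are the `p`-th roots of a point of `Λ`, then `|A - B| ≤ C ≤ A + B`, so the point lies
on the vertical segment from `m(A, B)` to `m(A, -B)`. In a normed space, take `A` and `±B` along a
unit vector.
-/

open Set

theorem rpow_one_div_rpow {p x : ℝ} (hp : p ≠ 0) (hx : 0 ≤ x) : (x ^ (1 / p)) ^ p = x := by
  rw [one_div, Real.rpow_inv_rpow hx hp]

theorem rpow_one_div_sum_le_add {ι : Type*} (s : Finset ι) {p : ℝ} (hp : 1 ≤ p) {f g h : ι → ℝ}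
    (hf : ∀ i ∈ s, 0 ≤ f i) (hg : ∀ i ∈ s, 0 ≤ g i) (hh : ∀ i ∈ s, 0 ≤ h i)
    (hfg : ∀ i ∈ s, h i ^ (1 / p) ≤ f i ^ (1 / p) + g i ^ (1 / p)) :
    (∑ i ∈ s, h i) ^ (1 / p) ≤ (∑ i ∈ s, f i) ^ (1 / p) + (∑ i ∈ s, g i) ^ (1 / p) := by
  have hp₀ : 0 < p := by linarith
  have root_pow {u : ι → ℝ} (hu : ∀ i ∈ s, 0 ≤ u i) :
      ∑ i ∈ s, (u i ^ (1 / p)) ^ p = ∑ i ∈ s, u i :=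
    Finset.sum_congr rfl fun i hi => rpow_one_div_rpow hp₀.ne' (hu i hi)
  have root_nonneg {u : ι → ℝ} (hu : ∀ i ∈ s, 0 ≤ u i) : ∀ i ∈ s, 0 ≤ u i ^ (1 / p) :=
    fun i hi => Real.rpow_nonneg (hu i hi) _
  calc (∑ i ∈ s, h i) ^ (1 / p)
      = (∑ i ∈ s, (h i ^ (1 / p)) ^ p) ^ (1 / p) := by rw [root_pow hh]
    _ ≤ (∑ i ∈ s, (f i ^ (1 / p) + g i ^ (1 / p)) ^ p) ^ (1 / p) := by
        refine Real.rpow_le_rpow (Finset.sum_nonneg fun i hi => ?_)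
          (Finset.sum_le_sum fun i hi => ?_) (by positivity)
        · exact Real.rpow_nonneg (root_nonneg hh i hi) _
        · exact Real.rpow_le_rpow (root_nonneg hh i hi) (hfg i hi) hp₀.le
    _ ≤ (∑ i ∈ s, (f i ^ (1 / p)) ^ p) ^ (1 / p) + (∑ i ∈ s, (g i ^ (1 / p)) ^ p) ^ (1 / p) :=
        Real.Lp_add_le_of_nonneg s hp (root_nonneg hf) (root_nonneg hg)
    _ = (∑ i ∈ s, f i) ^ (1 / p) + (∑ i ∈ s, g i) ^ (1 / p) := by rw [root_pow hf, root_pow hg]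

theorem rpow_one_div_add_le_add {p : ℝ} (hp : 1 ≤ p) {a b c a' b' c' : ℝ}
    (ha : 0 ≤ a) (hb : 0 ≤ b) (hc : 0 ≤ c) (ha' : 0 ≤ a') (hb' : 0 ≤ b') (hc' : 0 ≤ c')
    (h : c ^ (1 / p) ≤ a ^ (1 / p) + b ^ (1 / p))
    (h' : c' ^ (1 / p) ≤ a' ^ (1 / p) + b' ^ (1 / p)) :
    (c + c') ^ (1 / p) ≤ (a + a') ^ (1 / p) + (b + b') ^ (1 / p) := by
  have hroots : ∀ i : Fin 2, ![c, c'] i ^ (1 / p) ≤ ![a, a'] i ^ (1 / p) + ![b, b'] i ^ (1 / p) :=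
    Fin.forall_fin_two.2 ⟨h, h'⟩
  simpa only [Fin.sum_univ_two, Matrix.cons_val_zero, Matrix.cons_val_one] using
    rpow_one_div_sum_le_add Finset.univ hp (by simp [ha, ha']) (by simp [hb, hb'])
      (by simp [hc, hc']) fun i _ => hroots i

theorem mul_rpow_le_mul_rpow_add_mul_rpow {q t a b c : ℝ} (ht : 0 ≤ t) (ha : 0 ≤ a) (hb : 0 ≤ b)
    (hc : 0 ≤ c) (h : c ^ q ≤ a ^ q + b ^ q) : (t * c) ^ q ≤ (t * a) ^ q + (t * b) ^ q := by
  rw [Real.mul_rpow ht hc, Real.mul_rpow ht ha, Real.mul_rpow ht hb, ← mul_add]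
  exact mul_le_mul_of_nonneg_left h (Real.rpow_nonneg ht q)

/-- The cone `Λ` of nonnegative triples whose `p`-th roots satisfy the three triangle inequalities.
It is bundled as a `ConvexCone`, whose closure under addition is Minkowski's inequality. -/
def rpowTriangleCone (p : ℝ) (hp : 1 ≤ p) : ConvexCone ℝ (ℝ × ℝ × ℝ) where
  carrier := {x | 0 ≤ x.1 ∧ 0 ≤ x.2.1 ∧ 0 ≤ x.2.2 ∧
    x.2.2 ^ (1 / p) ≤ x.1 ^ (1 / p) + x.2.1 ^ (1 / p) ∧
    x.1 ^ (1 / p) ≤ x.2.1 ^ (1 / p) + x.2.2 ^ (1 / p) ∧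
    x.2.1 ^ (1 / p) ≤ x.2.2 ^ (1 / p) + x.1 ^ (1 / p)}
  smul_mem' := by
    rintro t ht ⟨a, b, c⟩ ⟨ha, hb, hc, hab, hbc, hca⟩
    exact ⟨mul_nonneg ht.le ha, mul_nonneg ht.le hb, mul_nonneg ht.le hc,
      mul_rpow_le_mul_rpow_add_mul_rpow ht.le ha hb hc hab,
      mul_rpow_le_mul_rpow_add_mul_rpow ht.le hb hc ha hbc,
      mul_rpow_le_mul_rpow_add_mul_rpow ht.le hc ha hb hca⟩
  add_mem' := by
    rintro ⟨a, b, c⟩ ⟨ha, hb, hc, hab, hbc, hca⟩ ⟨a', b', c'⟩ ⟨ha', hb', hc', hab', hbc', hca'⟩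
    exact ⟨add_nonneg ha ha', add_nonneg hb hb', add_nonneg hc hc',
      rpow_one_div_add_le_add hp ha hb hc ha' hb' hc' hab hab',
      rpow_one_div_add_le_add hp hb hc ha hb' hc' ha' hbc hbc',
      rpow_one_div_add_le_add hp hc ha hb hc' ha' hb' hca hca'⟩

section NormedSpace

variable {E : Type*} [SeminormedAddCommGroup E] {p : ℝ}

theorem norm_rpow_mem_rpowTriangleCone (hp : 1 ≤ p) (x y : E) :
    (‖x‖ ^ p, ‖y‖ ^ p, ‖x - y‖ ^ p) ∈ rpowTriangleCone p hp := by
  have root (z : E) : (‖z‖ ^ p) ^ (1 / p) = ‖z‖ := by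
    rw [one_div, Real.rpow_rpow_inv (norm_nonneg z) (by linarith)]
  refine ⟨by positivity, by positivity, by positivity, ?_⟩
  simp only [root]
  refine ⟨norm_sub_le x y, norm_le_norm_add_norm_sub' x y, ?_⟩
  rw [add_comm]
  exact norm_le_norm_add_norm_sub x y

variable [NormedSpace ℝ E]

theorem rpow_mem_segment_norm_rpow (hp : 0 ≤ p) {e : E} (he : ‖e‖ = 1) {a b c : ℝ}
    (hab : c ≤ a + b) (hbc : a ≤ b + c) (hca : b ≤ c + a) :
    (a ^ p, b ^ p, c ^ p) ∈ segment ℝ (‖a • e‖ ^ p, ‖b • e‖ ^ p, ‖a • e - b • e‖ ^ p)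
      (‖a • e‖ ^ p, ‖-(b • e)‖ ^ p, ‖a • e - -(b • e)‖ ^ p) := by
  have ha : 0 ≤ a := by linarith
  have hb : 0 ≤ b := by linarith
  have hc : 0 ≤ c := by linarith
  have norm_smul_e (t : ℝ) : ‖t • e‖ = |t| := by rw [norm_smul, he, mul_one, Real.norm_eq_abs]
  have lower : |a - b| ^ p ≤ c ^ p :=
    Real.rpow_le_rpow (abs_nonneg _) (abs_le.2 ⟨by linarith, by linarith⟩) hp
  have upper : c ^ p ≤ (a + b) ^ p := Real.rpow_le_rpow hc hab hp
  rw [sub_neg_eq_add, norm_neg, ← sub_smul, ← add_smul]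
  simp only [norm_smul_e, abs_of_nonneg ha, abs_of_nonneg hb, abs_of_nonneg (add_nonneg ha hb)]
  rw [← Prod.image_mk_segment_right, ← Prod.image_mk_segment_right,
    segment_eq_Icc (lower.trans upper)]
  exact mem_image_of_mem _ (mem_image_of_mem _ ⟨lower, upper⟩)

theorem rpowTriangleCone_subset_convexHull_range [NontrivialTopology E] (hp : 1 ≤ p) :
    (rpowTriangleCone p hp : Set (ℝ × ℝ × ℝ)) ⊆
      convexHull ℝ (range fun v : E × E => (‖v.1‖ ^ p, ‖v.2‖ ^ p, ‖v.1 - v.2‖ ^ p)) := by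
  rintro ⟨a, b, c⟩ ⟨ha, hb, hc, hab, hbc, hca⟩
  dsimp only at ha hb hc
  obtain ⟨e, he⟩ := exists_norm_eq E zero_le_one
  have hp₀ : 0 < p := by linarith
  have mem_segment := rpow_mem_segment_norm_rpow hp₀.le he hab hbc hca
  simp only [rpow_one_div_rpow hp₀.ne' ha, rpow_one_div_rpow hp₀.ne' hb,
    rpow_one_div_rpow hp₀.ne' hc] at mem_segment
  exact segment_subset_convexHull (mem_range_self (a ^ (1 / p) • e, b ^ (1 / p) • e))
    (mem_range_self (a ^ (1 / p) • e, -(b ^ (1 / p) • e))) mem_segment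

theorem convexHull_image_eq_cone_general [NontrivialTopology E] (hp : 1 ≤ p) :
    convexHull ℝ (range fun v : E × E => (‖v.1‖ ^ p, ‖v.2‖ ^ p, ‖v.1 - v.2‖ ^ p))
      = rpowTriangleCone p hp := by
  refine (convexHull_min ?_ (rpowTriangleCone p hp).convex).antisymm
    (rpowTriangleCone_subset_convexHull_range hp)
  rintro _ ⟨⟨x, y⟩, rfl⟩
  exact norm_rpow_mem_rpowTriangleCone hp x y

end NormedSpace

/-- For `p ≥ 1` and `m(x,y) = (|x|^p, |y|^p, |x−y|^p)`, the convex hull of the image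
`m(ℝ²)` is the cone `Λ` of nonnegative triples whose `p`-th roots satisfy the three
triangle inequalities. -/
theorem convexHull_image_eq_cone (p : ℝ) (hp : 1 ≤ p) :
    convexHull ℝ (Set.range (fun v : ℝ × ℝ => (|v.1| ^ p, |v.2| ^ p, |v.1 - v.2| ^ p)))
      = {x : ℝ × ℝ × ℝ | 0 ≤ x.1 ∧ 0 ≤ x.2.1 ∧ 0 ≤ x.2.2 ∧
          x.2.2 ^ (1/p) ≤ x.1 ^ (1/p) + x.2.1 ^ (1/p) ∧
          x.1 ^ (1/p) ≤ x.2.1 ^ (1/p) + x.2.2 ^ (1/p) ∧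
          x.2.1 ^ (1/p) ≤ x.2.2 ^ (1/p) + x.1 ^ (1/p)} :=
  convexHull_image_eq_cone_general hp
end

section
/- Let p ≥ 1 be a real number and define m : ℝ² → ℝ³ by m(x,y) = (|x|^p, |y|^p, |x−y|^p). Then a triple (x₁,x₂,x₃) ∈ ℝ³ lies in the image m(ℝ²) if and only if x₁, x₂, x₃ ≥ 0 and at least one of the following equalities holds: x₁^{1/p} + x₂^{1/p} = x₃^{1/p}, or x₂^{1/p} + x₃^{1/p} = x₁^{1/p}, or x₃^{1/p} + x₁^{1/p} = x₂^{1/p}. In other words, m(ℝ²) is exactly the boundary ∂Λ of the cone Λ = { (x₁,x₂,x₃) : xᵢ ≥ 0 and the three triangle inequalities x_i^{1/p} + x_j^{1/p} ≥ x_k^{1/p} hold }. -/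
/-!
The triple `(|x|, |y|, |x - y|)` lists the mutual distances of the points `0`, `x`, `y` of the line.
One of three points of a line lies between the other two, so one distance is the sum of the other
two; conversely every degenerate triangle can be laid on the line with one vertex at `0`. Since
`t ↦ t ^ p` is a bijection of the half-line `[0, ∞)`, taking `p`-th roots reduces the claim to
this fact.
-/

theorem mem_uIcc_or_mem_uIcc_or_mem_uIcc {α : Type*} [LinearOrder α] (a b c : α) :
    a ∈ Set.uIcc b c ∨ b ∈ Set.uIcc c a ∨ c ∈ Set.uIcc a b := by
  simp only [Set.mem_uIcc]
  grind

section DegenerateTriangle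

variable {G : Type*} [AddCommGroup G] [LinearOrder G] [IsOrderedAddMonoid G]

theorem abs_sub_add_abs_sub_of_mem_uIcc {a b c : G} (hb : b ∈ Set.uIcc a c) :
    |a - b| + |b - c| = |a - c| := by
  rcases Set.mem_uIcc.mp hb with ⟨hab, hbc⟩ | ⟨hcb, hba⟩
  · rw [abs_sub_comm a b, abs_sub_comm b c, abs_sub_comm a c, abs_of_nonneg (sub_nonneg.mpr hab),
      abs_of_nonneg (sub_nonneg.mpr hbc), abs_of_nonneg (sub_nonneg.mpr (hab.trans hbc)),
      add_comm, sub_add_sub_cancel]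
  · rw [abs_of_nonneg (sub_nonneg.mpr hba), abs_of_nonneg (sub_nonneg.mpr hcb),
      abs_of_nonneg (sub_nonneg.mpr (hcb.trans hba)), sub_add_sub_cancel]

theorem abs_add_abs_eq_abs_sub_or (a b : G) :
    |a| + |b| = |a - b| ∨ |b| + |a - b| = |a| ∨ |a - b| + |a| = |b| := by
  rcases mem_uIcc_or_mem_uIcc_or_mem_uIcc 0 a b with h0 | ha | hb
  · left
    simpa only [sub_zero, zero_sub, abs_neg] using abs_sub_add_abs_sub_of_mem_uIcc h0
  · right; right
    simpa only [sub_zero, abs_sub_comm b a] using abs_sub_add_abs_sub_of_mem_uIcc ha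
  · right; left
    simpa only [sub_zero, zero_sub, abs_neg, abs_sub_comm b a] using
      abs_sub_add_abs_sub_of_mem_uIcc hb

theorem exists_abs_eq_and_abs_sub_eq_iff {a b c : G} (ha : 0 ≤ a) (hb : 0 ≤ b) (hc : 0 ≤ c) :
    (∃ s t : G, |s| = a ∧ |t| = b ∧ |s - t| = c) ↔ a + b = c ∨ b + c = a ∨ c + a = b := by
  constructor
  · rintro ⟨s, t, rfl, rfl, rfl⟩
    exact abs_add_abs_eq_abs_sub_or s t
  · rintro (rfl | rfl | rfl)
    · exact ⟨a, -b, abs_of_nonneg ha, by rw [abs_neg, abs_of_nonneg hb],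
        by rw [sub_neg_eq_add, abs_of_nonneg hc]⟩
    · exact ⟨b + c, b, abs_of_nonneg ha, abs_of_nonneg hb,
        by rw [add_sub_cancel_left, abs_of_nonneg hc]⟩
    · exact ⟨a, c + a, abs_of_nonneg ha, abs_of_nonneg hb,
        by rw [abs_sub_comm, add_sub_cancel_right, abs_of_nonneg hc]⟩

end DegenerateTriangle

theorem rpow_eq_iff_nonneg_and_eq_rpow_one_div {p t x : ℝ} (hp : p ≠ 0) (ht : 0 ≤ t) :
    t ^ p = x ↔ 0 ≤ x ∧ t = x ^ (1 / p) := by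
  rw [one_div]
  constructor
  · rintro rfl
    exact ⟨Real.rpow_nonneg ht p, (Real.rpow_rpow_inv ht hp).symm⟩
  · rintro ⟨hx, rfl⟩
    exact Real.rpow_inv_rpow hx hp

theorem range_eq_boundary_cone_general (p : ℝ) (hp : 0 < p) :
    Set.range (fun v : ℝ × ℝ => (|v.1| ^ p, |v.2| ^ p, |v.1 - v.2| ^ p))
      = {x : ℝ × ℝ × ℝ | 0 ≤ x.1 ∧ 0 ≤ x.2.1 ∧ 0 ≤ x.2.2 ∧
          (x.1 ^ (1 / p) + x.2.1 ^ (1 / p) = x.2.2 ^ (1 / p) ∨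
           x.2.1 ^ (1 / p) + x.2.2 ^ (1 / p) = x.1 ^ (1 / p) ∨
           x.2.2 ^ (1 / p) + x.1 ^ (1 / p) = x.2.1 ^ (1 / p))} := by
  ext ⟨x, y, z⟩
  have root_iff (t u : ℝ) : |t| ^ p = u ↔ 0 ≤ u ∧ |t| = u ^ (1 / p) :=
    rpow_eq_iff_nonneg_and_eq_rpow_one_div hp.ne' (abs_nonneg t)
  have distances_iff (hx : 0 ≤ x) (hy : 0 ≤ y) (hz : 0 ≤ z) :=
    exists_abs_eq_and_abs_sub_eq_iff (Real.rpow_nonneg hx (1 / p)) (Real.rpow_nonneg hy (1 / p))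
      (Real.rpow_nonneg hz (1 / p))
  simp only [Set.mem_range, Set.mem_ofPred_eq, Prod.mk.injEq, Prod.exists, root_iff]
  constructor
  · rintro ⟨s, t, ⟨hx, hs⟩, ⟨hy, ht⟩, ⟨hz, hst⟩⟩
    exact ⟨hx, hy, hz, (distances_iff hx hy hz).mp ⟨s, t, hs, ht, hst⟩⟩
  · rintro ⟨hx, hy, hz, h⟩
    obtain ⟨s, t, hs, ht, hst⟩ := (distances_iff hx hy hz).mpr h
    exact ⟨s, t, ⟨hx, hs⟩, ⟨hy, ht⟩, ⟨hz, hst⟩⟩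

/-- For `p ≥ 1` and `m(x,y) = (|x|^p, |y|^p, |x−y|^p)`, a triple lies in the image
`m(ℝ²)` iff it is nonnegative and one of the three triangle inequalities on the `p`-th
roots holds with equality; i.e. `m(ℝ²)` is the boundary `∂Λ` of the cone `Λ`. -/
theorem range_eq_boundary_cone (p : ℝ) (hp : 1 ≤ p) :
    Set.range (fun v : ℝ × ℝ => (|v.1| ^ p, |v.2| ^ p, |v.1 - v.2| ^ p))
      = {x : ℝ × ℝ × ℝ | 0 ≤ x.1 ∧ 0 ≤ x.2.1 ∧ 0 ≤ x.2.2 ∧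
          (x.1 ^ (1/p) + x.2.1 ^ (1/p) = x.2.2 ^ (1/p) ∨
           x.2.1 ^ (1/p) + x.2.2 ^ (1/p) = x.1 ^ (1/p) ∨
           x.2.2 ^ (1/p) + x.1 ^ (1/p) = x.2.1 ^ (1/p))} :=
  range_eq_boundary_cone_general p (zero_lt_one.trans_le hp)
end

section
/- Let p ∈ (1,∞) and let a, b ≥ 0. If f, g : [0,1] → ℝ are measurable functions with ∫₀¹ |f|^p = a^p, ∫₀¹ |g|^p = b^p, and ∫₀¹ |f−g|^p = (a+b)^p, then ∫₀¹ |(f+g)/2|^p = |a−b|^p / 2^p. -/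
open MeasureTheory Set

/-!
For `1 < p < ∞` the space `Lᵖ` is strictly convex, because `‖·‖ ^ p` is a strictly convex function
on a strictly convex space. The hypothesis says `‖f - g‖ = ‖f‖ + ‖g‖` in `Lᵖ`, so `f` and `-g` lie
on a common ray, and therefore `‖f + g‖ = |‖f‖ - ‖g‖|`.
-/

open scoped ENNReal

variable {α E : Type*} [MeasurableSpace α] {μ : Measure α} [NormedAddCommGroup E]

theorem ae_eq_of_integral_comp_combo_eq {F : Type*} [AddCommMonoid F] [Module ℝ F] {s : Set F}
    {φ : F → ℝ} {f g : α → F} {a b : ℝ} (hφ : StrictConvexOn ℝ s φ) (ha : 0 < a) (hb : 0 < b)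
    (hab : a + b = 1) (hfs : ∀ᵐ t ∂μ, f t ∈ s) (hgs : ∀ᵐ t ∂μ, g t ∈ s)
    (hf : Integrable (fun t ↦ φ (f t)) μ) (hg : Integrable (fun t ↦ φ (g t)) μ)
    (hfg : Integrable (fun t ↦ φ (a • f t + b • g t)) μ)
    (h : ∫ t, φ (a • f t + b • g t) ∂μ = a * ∫ t, φ (f t) ∂μ + b * ∫ t, φ (g t) ∂μ) :
    f =ᵐ[μ] g := by
  have hle : ∀ᵐ t ∂μ, φ (a • f t + b • g t) ≤ a * φ (f t) + b * φ (g t) := by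
    filter_upwards [hfs, hgs] with t hft hgt
    exact hφ.convexOn.2 hft hgt ha.le hb.le hab
  have heq : ∀ᵐ t ∂μ, φ (a • f t + b • g t) = a * φ (f t) + b * φ (g t) := by
    refine (integral_eq_iff_of_ae_le hfg ((hf.const_mul a).add (hg.const_mul b)) hle).1 ?_
    rw [h, integral_add' (hf.const_mul a) (hg.const_mul b), integral_const_mul, integral_const_mul]
  filter_upwards [hfs, hgs, heq] with t hft hgt ht
  by_contra hne
  exact (hφ.2 hft hgt hne ha hb hab).ne ht

theorem norm_toLp_eq_iff_integral_norm_rpow_eq {p : ℝ≥0∞} (hp₀ : p ≠ 0) (hp : p ≠ ∞) {f : α → E}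
    (hf : MemLp f p μ) {c : ℝ} (hc : 0 ≤ c) :
    ‖hf.toLp f‖ = c ↔ ∫ t, ‖f t‖ ^ p.toReal ∂μ = c ^ p.toReal := by
  rw [Lp.norm_toLp, toReal_eLpNorm hf.1, lpNorm_eq_integral_norm_rpow_toReal hp₀ hp hf.1,
    Real.rpow_inv_eq (by positivity) hc (ENNReal.toReal_ne_zero.2 ⟨hp₀, hp⟩)]

variable [NormedSpace ℝ E] [StrictConvexSpace ℝ E]

theorem strictConvexOn_norm_rpow {p : ℝ} (hp : 1 < p) :
    StrictConvexOn ℝ univ fun x : E ↦ ‖x‖ ^ p := by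
  refine ⟨convex_univ, fun x _ y _ hxy a b ha hb hab ↦ ?_⟩
  have : 0 < p := one_pos.trans hp
  simp only [smul_eq_mul]
  by_cases hnorm : ‖x‖ = ‖y‖
  · calc ‖a • x + b • y‖ ^ p
        < ‖y‖ ^ p := by gcongr; exact norm_combo_lt_of_ne hnorm.le le_rfl hxy ha hb hab
      _ = a * ‖x‖ ^ p + b * ‖y‖ ^ p := by rw [hnorm, ← add_mul, hab, one_mul]
  · calc ‖a • x + b • y‖ ^ p
        ≤ (a * ‖x‖ + b * ‖y‖) ^ p := by
          gcongr
          simpa only [norm_smul_of_nonneg ha.le, norm_smul_of_nonneg hb.le]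
            using norm_add_le (a • x) (b • y)
      _ < a * ‖x‖ ^ p + b * ‖y‖ ^ p :=
          (strictConvexOn_rpow hp).2 (norm_nonneg x) (norm_nonneg y) hnorm ha hb hab

theorem norm_add_eq_abs_norm_sub_norm_of_norm_sub_eq_norm_add_norm {x y : E}
    (h : ‖x - y‖ = ‖x‖ + ‖y‖) : ‖x + y‖ = |‖x‖ - ‖y‖| := by
  have hray : SameRay ℝ x (-y) := by
    rwa [sameRay_iff_norm_add, ← sub_eq_add_neg, norm_neg]
  simpa only [sub_neg_eq_add, norm_neg] using hray.norm_sub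

theorem strictConvexSpace_Lp {p : ℝ≥0∞} [Fact (1 ≤ p)] (hp₁ : 1 < p) (hp : p ≠ ∞) :
    StrictConvexSpace ℝ (Lp E p μ) := by
  have hp₀ : p ≠ 0 := (one_pos.trans hp₁).ne'
  have one_lt_toReal : 1 < p.toReal := by
    rwa [← ENNReal.toReal_one, ENNReal.toReal_lt_toReal ENNReal.one_ne_top hp]
  have integrable_rpow {u : α → E} (hu : MemLp u p μ) : Integrable (fun t ↦ ‖u t‖ ^ p.toReal) μ :=
    (integrable_norm_rpow_iff hu.1 hp₀ hp).2 hu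
  have integral_rpow {u : α → E} (hu : MemLp u p μ) (hnorm : ‖hu.toLp u‖ = 1) :
      ∫ t, ‖u t‖ ^ p.toReal ∂μ = 1 := by
    simpa only [Real.one_rpow] using
      (norm_toLp_eq_iff_integral_norm_rpow_eq hp₀ hp hu zero_le_one).1 hnorm
  have hhalf : (0 : ℝ) < 1 / 2 := one_half_pos
  refine .of_norm_combo_ne_one fun f g hf hg hne ↦
    ⟨1 / 2, 1 / 2, hhalf.le, hhalf.le, add_halves 1, fun hmid ↦ hne (Lp.ext ?_)⟩
  have hfm := Lp.memLp f
  have hgm := Lp.memLp g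
  have hmidm : MemLp (fun t ↦ (1 / 2 : ℝ) • f t + (1 / 2 : ℝ) • g t) p μ :=
    (hfm.const_smul _).add (hgm.const_smul _)
  rw [← Lp.toLp_coeFn f hfm] at hf hmid
  rw [← Lp.toLp_coeFn g hgm] at hg hmid
  refine ae_eq_of_integral_comp_combo_eq (strictConvexOn_norm_rpow one_lt_toReal) hhalf hhalf
    (add_halves 1) (.of_forall fun _ ↦ mem_univ _) (.of_forall fun _ ↦ mem_univ _)
    (integrable_rpow hfm) (integrable_rpow hgm) (integrable_rpow hmidm) ?_
  rw [integral_rpow hmidm hmid, integral_rpow hfm hf, integral_rpow hgm hg]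
  norm_num

theorem boundary_face_one_general {p a b : ℝ} (hp : 1 < p) (ha : 0 ≤ a) (hb : 0 ≤ b) {f g : α → E}
    (hfm : AEStronglyMeasurable f μ) (hgm : AEStronglyMeasurable g μ)
    (hfi : Integrable (fun t ↦ ‖f t‖ ^ p) μ) (hgi : Integrable (fun t ↦ ‖g t‖ ^ p) μ)
    (hf : ∫ t, ‖f t‖ ^ p ∂μ = a ^ p) (hg : ∫ t, ‖g t‖ ^ p ∂μ = b ^ p)
    (hfg : ∫ t, ‖f t - g t‖ ^ p ∂μ = (a + b) ^ p) :
    ∫ t, ‖(2⁻¹ : ℝ) • (f t + g t)‖ ^ p ∂μ = |a - b| ^ p / 2 ^ p := by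
  lift p to NNReal using (one_pos.trans hp).le
  have hp₁ : 1 < (p : ℝ≥0∞) := mod_cast hp
  have hp₀ : (p : ℝ≥0∞) ≠ 0 := (one_pos.trans hp₁).ne'
  have : Fact (1 ≤ (p : ℝ≥0∞)) := ⟨hp₁.le⟩
  have : StrictConvexSpace ℝ (Lp E p μ) := strictConvexSpace_Lp hp₁ ENNReal.coe_ne_top
  have hF : MemLp f p μ := (integrable_norm_rpow_iff hfm hp₀ ENNReal.coe_ne_top).1 hfi
  have hG : MemLp g p μ := (integrable_norm_rpow_iff hgm hp₀ ENNReal.coe_ne_top).1 hgi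
  have norm_eq_iff {u : α → E} (hu : MemLp u p μ) {c : ℝ} (hc : 0 ≤ c) :
      ‖hu.toLp u‖ = c ↔ ∫ t, ‖u t‖ ^ (p : ℝ) ∂μ = c ^ (p : ℝ) :=
    norm_toLp_eq_iff_integral_norm_rpow_eq hp₀ ENNReal.coe_ne_top hu hc
  have hF_norm : ‖hF.toLp f‖ = a := (norm_eq_iff hF ha).2 hf
  have hG_norm : ‖hG.toLp g‖ = b := (norm_eq_iff hG hb).2 hg
  have hsub : ‖hF.toLp f - hG.toLp g‖ = ‖hF.toLp f‖ + ‖hG.toLp g‖ := by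
    rw [hF_norm, hG_norm]
    exact (norm_eq_iff (hF.sub hG) (add_nonneg ha hb)).2 hfg
  have hmid : ‖(2⁻¹ : ℝ) • (hF.toLp f + hG.toLp g)‖ = |a - b| / 2 := by
    rw [norm_smul_of_nonneg (by norm_num),
      norm_add_eq_abs_norm_sub_norm_of_norm_sub_eq_norm_add_norm hsub, hF_norm, hG_norm,
      div_eq_inv_mul]
  rw [← Real.div_rpow (abs_nonneg _) zero_le_two]
  exact (norm_eq_iff ((hF.add hG).const_smul (2⁻¹ : ℝ)) (by positivity)).1 hmid

/-- Boundary condition on the face `x₁^{1/p} + x₂^{1/p} = x₃^{1/p}`: if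
`∫|f|^p = a^p`, `∫|g|^p = b^p` and `∫|f−g|^p = (a+b)^p`, then
`∫|(f+g)/2|^p = |a−b|^p / 2^p`. -/
theorem boundary_face_one (p a b : ℝ) (hp1 : 1 < p) (ha : 0 ≤ a) (hb : 0 ≤ b)
    (f g : ℝ → ℝ) (hfm : Measurable f) (hgm : Measurable g)
    (hfi : IntegrableOn (fun t => |f t| ^ p) (Icc 0 1))
    (hgi : IntegrableOn (fun t => |g t| ^ p) (Icc 0 1))
    (hf : (∫ t in Icc (0:ℝ) 1, |f t| ^ p) = a ^ p)
    (hg : (∫ t in Icc (0:ℝ) 1, |g t| ^ p) = b ^ p)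
    (hfg : (∫ t in Icc (0:ℝ) 1, |f t - g t| ^ p) = (a + b) ^ p) :
    (∫ t in Icc (0:ℝ) 1, |(f t + g t) / 2| ^ p) = |a - b| ^ p / 2 ^ p := by
  simpa only [Real.norm_eq_abs, smul_eq_mul, ← div_eq_inv_mul] using
    boundary_face_one_general hp1 ha hb hfm.aestronglyMeasurable hgm.aestronglyMeasurable
      hfi hgi hf hg hfg
end

section
/- For every real p ≥ 2 and every real t ≥ 1/2, one has (t^p + |1−t|^p)/2 ≥ 2^{−p} + (t − 1/2)^p. -/
/-!
With `x = 1/2` and `y = t - 1/2` the claim is Clarkson's inequality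
`‖x‖ ^ p + ‖y‖ ^ p ≤ (‖x + y‖ ^ p + ‖x - y‖ ^ p) / 2`. For an inner product norm and `q = p / 2`,
superadditivity of `s ↦ s ^ q` bounds the left side by `(‖x‖ ^ 2 + ‖y‖ ^ 2) ^ q`. The parallelogram
law identifies the base with the mean of `‖x + y‖ ^ 2` and `‖x - y‖ ^ 2`, and convexity of
`s ↦ s ^ q` concludes.
-/

theorem sq_rpow_div_two (a p : ℝ) : (a ^ 2) ^ (p / 2) = |a| ^ p := by
  rw [Real.rpow_div_two_eq_sqrt p (sq_nonneg a), Real.sqrt_sq_eq_abs]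

theorem midpoint_rpow_le {q a b : ℝ} (hq : 1 ≤ q) (ha : 0 ≤ a) (hb : 0 ≤ b) :
    ((a + b) / 2) ^ q ≤ (a ^ q + b ^ q) / 2 := by
  have h := (convexOn_rpow hq).2 (Set.mem_Ici.2 ha) (Set.mem_Ici.2 hb)
    one_half_pos.le one_half_pos.le (add_halves 1)
  calc ((a + b) / 2) ^ q = ((1 / 2 : ℝ) • a + (1 / 2 : ℝ) • b) ^ q := by
        congr 1
        simp only [smul_eq_mul]
        ring
    _ ≤ (1 / 2 : ℝ) • a ^ q + (1 / 2 : ℝ) • b ^ q := h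
    _ = (a ^ q + b ^ q) / 2 := by
        simp only [smul_eq_mul]
        ring

theorem clarkson_inequality_of_two_le (𝕜 : Type*) {E : Type*} [RCLike 𝕜]
    [SeminormedAddCommGroup E] [InnerProductSpace 𝕜 E] {p : ℝ} (hp : 2 ≤ p) (x y : E) :
    ‖x‖ ^ p + ‖y‖ ^ p ≤ (‖x + y‖ ^ p + ‖x - y‖ ^ p) / 2 := by
  have hq : 1 ≤ p / 2 := (one_le_div two_pos).2 hp
  have norm_rpow (z : E) : ‖z‖ ^ p = (‖z‖ ^ 2) ^ (p / 2) := by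
    rw [sq_rpow_div_two, abs_norm]
  have parallelogram : ‖x‖ ^ 2 + ‖y‖ ^ 2 = (‖x + y‖ ^ 2 + ‖x - y‖ ^ 2) / 2 := by
    rw [parallelogram_law_with_norm 𝕜 x y, mul_div_cancel_left₀ _ two_ne_zero]
  simp only [norm_rpow]
  calc (‖x‖ ^ 2) ^ (p / 2) + (‖y‖ ^ 2) ^ (p / 2)
      ≤ (‖x‖ ^ 2 + ‖y‖ ^ 2) ^ (p / 2) :=
        Real.add_rpow_le_rpow_add (sq_nonneg _) (sq_nonneg _) hq
    _ = ((‖x + y‖ ^ 2 + ‖x - y‖ ^ 2) / 2) ^ (p / 2) := by rw [parallelogram]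
    _ ≤ ((‖x + y‖ ^ 2) ^ (p / 2) + (‖x - y‖ ^ 2) ^ (p / 2)) / 2 :=
        midpoint_rpow_le hq (sq_nonneg _) (sq_nonneg _)

theorem boundary_majorization_general {𝕜 : Type*} [RCLike 𝕜] {p : ℝ} (hp : 2 ≤ p) (z : 𝕜) :
    (2 : ℝ) ^ (-p) + ‖z - 1 / 2‖ ^ p ≤ (‖z‖ ^ p + ‖1 - z‖ ^ p) / 2 := by
  have clarkson := clarkson_inequality_of_two_le 𝕜 hp (1 / 2) (z - 1 / 2)
  have norm_half : ‖(1 / 2 : 𝕜)‖ = 2⁻¹ := by simp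
  have add_eq : 1 / 2 + (z - 1 / 2) = z := by ring
  have sub_eq : 1 / 2 - (z - 1 / 2) = 1 - z := by ring
  rwa [norm_half, ← Real.rpow_neg_eq_inv_rpow, add_eq, sub_eq] at clarkson

/-- For `p ≥ 2` and `t ≥ 1/2`: `(t^p + |1−t|^p)/2 ≥ 2^{−p} + (t − 1/2)^p`. -/
theorem boundary_majorization (p t : ℝ) (hp : 2 ≤ p) (ht : 1/2 ≤ t) :
    (2:ℝ) ^ (-p) + (t - 1/2) ^ p ≤ (t ^ p + |1 - t| ^ p) / 2 := by
  simpa only [Real.norm_eq_abs, abs_of_nonneg (sub_nonneg.2 ht),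
    abs_of_nonneg (one_half_pos.le.trans ht)] using boundary_majorization_general hp t
end

section
/- For every real p ≥ 2, the function W(s) = 1 − (s−1)^{p−1} − 2(1 − s/2)^{p−1} is concave on the interval [1,2] and satisfies W(s) ≥ 0 for all s ∈ [1,2]. -/
/-!
The bases `s - 1` and `1 - s / 2` are affine in `s` and lie in `[0, 1]` for `s ∈ [1, 2]`. With
`q = p - 1 ≥ 1`, the power `x ^ q` is convex on `[0, ∞)`, so `W` is a constant minus a sum of convex
functions. Moreover `x ^ q ≤ x` on `[0, 1]`, so replacing both powers by their bases can only
decrease `W`, and this replacement gives `1 - (s - 1) - 2 * (1 - s / 2) = 0`.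
-/

theorem convexOn_affineMap_rpow {E : Type*} [AddCommGroup E] [Module ℝ E] {t : Set E} {q : ℝ}
    (hq : 1 ≤ q) (ht : Convex ℝ t) (g : E →ᵃ[ℝ] ℝ) (hg : ∀ x ∈ t, 0 ≤ g x) :
    ConvexOn ℝ t fun x ↦ g x ^ q :=
  ((convexOn_rpow hq).comp_affineMap g).subset hg ht

theorem concaveOn_one_sub_rpow_sub_two_mul_rpow {q : ℝ} (hq : 1 ≤ q) :
    ConcaveOn ℝ (Set.Icc 1 2) fun s : ℝ ↦ 1 - (s - 1) ^ q - 2 * (1 - s / 2) ^ q := by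
  have hconvex : Convex ℝ (Set.Icc (1 : ℝ) 2) := convex_Icc 1 2
  have convexOn_left : ConvexOn ℝ (Set.Icc 1 2) fun s : ℝ ↦ (s - 1) ^ q :=
    convexOn_affineMap_rpow hq hconvex (AffineMap.id ℝ ℝ - AffineMap.const ℝ ℝ 1)
      fun _ hs ↦ sub_nonneg.2 hs.1
  have convexOn_right : ConvexOn ℝ (Set.Icc 1 2) fun s : ℝ ↦ (1 - s / 2) ^ q := by
    let g : ℝ →ᵃ[ℝ] ℝ := AffineMap.const ℝ ℝ 1 - (2⁻¹ : ℝ) • AffineMap.id ℝ ℝ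
    have g_apply (s : ℝ) : g s = 1 - s / 2 := show 1 - 2⁻¹ * s = 1 - s / 2 by ring
    simpa only [g_apply] using
      convexOn_affineMap_rpow hq hconvex g fun s hs ↦ by linarith [g_apply s, hs.2]
  exact ((concaveOn_const 1 hconvex).sub convexOn_left).sub (convexOn_right.smul zero_le_two)

theorem one_sub_rpow_sub_two_mul_rpow_nonneg {q s : ℝ} (hq : 1 ≤ q) (hs : s ∈ Set.Icc 1 2) :
    0 ≤ 1 - (s - 1) ^ q - 2 * (1 - s / 2) ^ q := by
  obtain ⟨one_le_s, s_le_two⟩ := hs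
  have left_le : (s - 1) ^ q ≤ s - 1 :=
    Real.rpow_le_self_of_le_one (by linarith) (by linarith) hq
  have right_le : (1 - s / 2) ^ q ≤ 1 - s / 2 :=
    Real.rpow_le_self_of_le_one (by linarith) (by linarith) hq
  calc
    0 = 1 - (s - 1) - 2 * (1 - s / 2) := by ring
    _ ≤ 1 - (s - 1) ^ q - 2 * (1 - s / 2) ^ q := by gcongr

/-- For `p ≥ 2`, the function `W(s) = 1 − (s−1)^{p−1} − 2(1 − s/2)^{p−1}` is concave
on `[1,2]` and nonnegative there. -/
theorem W_concave_nonneg (p : ℝ) (hp : 2 ≤ p)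
    (W : ℝ → ℝ)
    (hW : W = fun s => 1 - (s - 1) ^ (p - 1) - 2 * (1 - s / 2) ^ (p - 1)) :
    ConcaveOn ℝ (Set.Icc (1:ℝ) 2) W ∧ ∀ s ∈ Set.Icc (1:ℝ) 2, 0 ≤ W s := by
  have one_le_exponent : 1 ≤ p - 1 := by linarith
  subst hW
  exact ⟨concaveOn_one_sub_rpow_sub_two_mul_rpow one_le_exponent,
    fun _ hs ↦ one_sub_rpow_sub_two_mul_rpow_nonneg one_le_exponent hs⟩
end

section
/- For every real p ≥ 2, the function V(s) = (s^p + |1−s|^p)/2 − 2^{−p} − (s − 1/2)^p is monotonically nondecreasing on the interval [1/2, ∞); equivalently, V'(s) ≥ 0 for every s > 1/2. -/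
/-!
For `s ≥ 1/2` put `u = s - 1/2` and `F x = |x| ^ p`. Up to a constant, `V s` is
`(F (u + 1/2) + F (u - 1/2)) / 2 - F u`, so with `φ = F'` monotonicity amounts to
`φ u ≤ (φ (u + 1/2) + φ (u - 1/2)) / 2`. For `p ≥ 2` the function `φ` is odd and convex on
`[0, ∞)`. If both arguments are nonnegative, this is midpoint convexity; if `u - 1/2` is negative,
oddness turns it into `2 φ u + φ (1/2 - u) ≤ φ (2 u + (1/2 - u))`, an instance of superadditivity.
-/

open Set

theorem map_smul_le_smul_of_convexOn {𝕜 E β : Type*} [Ring 𝕜] [PartialOrder 𝕜]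
    [IsOrderedRing 𝕜] [AddCommMonoid E] [Module 𝕜 E] [AddCommMonoid β] [PartialOrder β]
    [IsOrderedAddMonoid β] [Module 𝕜 β] [PosSMulMono 𝕜 β] {s : Set E} {f : E → β}
    (hf : ConvexOn 𝕜 s f) (h0s : 0 ∈ s) (hf0 : f 0 ≤ 0) {x : E} (hx : x ∈ s) {t : 𝕜}
    (ht0 : 0 ≤ t) (ht1 : t ≤ 1) : f (t • x) ≤ t • f x := by
  have h1t : 0 ≤ 1 - t := sub_nonneg.2 ht1
  calc
    f (t • x) = f (t • x + (1 - t) • 0) := by rw [smul_zero, add_zero]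
    _ ≤ t • f x + (1 - t) • f 0 := hf.2 hx h0s ht0 h1t (add_sub_cancel t 1)
    _ ≤ t • f x := add_le_of_nonpos_right (smul_nonpos_of_nonneg_of_nonpos h1t hf0)

section OrderedField

variable {𝕜 : Type*} [Field 𝕜] [LinearOrder 𝕜] [IsStrictOrderedRing 𝕜] {φ : 𝕜 → 𝕜} {x y : 𝕜}

theorem map_add_map_le_map_add_of_convexOn_Ici (hφ : ConvexOn 𝕜 (Ici 0) φ) (hφ0 : φ 0 ≤ 0)
    (hx : 0 ≤ x) (hy : 0 ≤ y) : φ x + φ y ≤ φ (x + y) := by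
  obtain hxy | hxy := (add_nonneg hx hy).eq_or_lt
  · obtain ⟨rfl, rfl⟩ := (add_eq_zero_iff_of_nonneg hx hy).1 hxy.symm
    simpa using hφ0
  · have chord {z : 𝕜} (hz0 : 0 ≤ z) (hz : z ≤ x + y) : φ z ≤ z / (x + y) * φ (x + y) := by
      simpa [div_mul_cancel₀ z hxy.ne'] using
        map_smul_le_smul_of_convexOn hφ self_mem_Ici hφ0 (mem_Ici.2 hxy.le)
          (div_nonneg hz0 hxy.le) (div_le_one_of_le₀ hz hxy.le)
    calc
      φ x + φ y ≤ x / (x + y) * φ (x + y) + y / (x + y) * φ (x + y) :=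
        add_le_add (chord hx (le_add_of_nonneg_right hy)) (chord hy (le_add_of_nonneg_left hx))
      _ = φ (x + y) := by rw [← add_mul, ← add_div, div_self hxy.ne', one_mul]

theorem map_half_add_le_of_odd_of_convexOn_Ici (hodd : φ.Odd)
    (hφ : ConvexOn 𝕜 (Ici 0) φ) (hxy : 0 ≤ x + y) : φ ((x + y) / 2) ≤ (φ x + φ y) / 2 := by
  wlog hle : y ≤ x generalizing x y
  · simpa only [add_comm] using this (add_comm x y ▸ hxy) (le_of_not_ge hle)
  have hx : 0 ≤ x := by linarith
  obtain hy | hy := le_total 0 y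
  · have h := hφ.2 (mem_Ici.2 hx) (mem_Ici.2 hy) one_half_pos.le one_half_pos.le (add_halves 1)
    simp only [smul_eq_mul, ← mul_add] at h
    simpa only [one_div_mul_eq_div] using h
  · have hm0 : 0 ≤ (x + y) / 2 := div_nonneg hxy zero_le_two
    have double : φ ((x + y) / 2) + φ ((x + y) / 2) ≤ φ (x + y) := by
      simpa only [add_halves] using
        map_add_map_le_map_add_of_convexOn_Ici hφ hodd.map_zero.le hm0 hm0
    have reflect : φ (x + y) - φ y ≤ φ x := by
      simpa only [hodd y, ← sub_eq_add_neg, add_sub_cancel_right] using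
        map_add_map_le_map_add_of_convexOn_Ici hφ hodd.map_zero.le hxy (neg_nonneg.2 hy)
    linarith

end OrderedField

theorem monotoneOn_average_translates_sub {F φ : ℝ → ℝ} (hF : ∀ x, HasDerivAt F (φ x) x)
    (hodd : φ.Odd) (hφ : ConvexOn ℝ (Ici 0) φ) (a : ℝ) :
    MonotoneOn (fun u => (F (u + a) + F (u - a)) / 2 - F u) (Ici 0) := by
  have hderiv (u : ℝ) : HasDerivAt (fun u => (F (u + a) + F (u - a)) / 2 - F u)
      ((φ (u + a) + φ (u - a)) / 2 - φ u) u :=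
    ((((hF _).comp_add_const u a).add ((hF _).comp_sub_const u a)).div_const 2).sub (hF u)
  refine monotoneOn_of_hasDerivWithinAt_nonneg (convex_Ici 0)
    (fun u _ => (hderiv u).continuousAt.continuousWithinAt)
    (fun u _ => (hderiv u).hasDerivWithinAt) fun u hu => sub_nonneg.2 ?_
  have hsum : u + a + (u - a) = 2 * u := by ring
  have hu0 : 0 ≤ u := interior_subset hu
  simpa [hsum] using map_half_add_le_of_odd_of_convexOn_Ici hodd hφ
    (x := u + a) (y := u - a) (by linarith)

theorem odd_abs_rpow_mul_self (r : ℝ) : (fun x : ℝ => |x| ^ r * x).Odd := fun x => by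
  simp only [abs_neg, mul_neg]

theorem convexOn_Ici_abs_rpow_mul_self {r : ℝ} (hr : 0 ≤ r) :
    ConvexOn ℝ (Ici 0) fun x : ℝ => |x| ^ r * x := by
  refine (convexOn_rpow (le_add_of_nonneg_left hr)).congr fun x (hx : 0 ≤ x) => ?_
  simp only [abs_of_nonneg hx, Real.rpow_add_one' hx (add_pos_of_nonneg_of_pos hr one_pos).ne']

theorem monotoneOn_average_abs_rpow_sub {p : ℝ} (hp : 2 ≤ p) (a : ℝ) :
    MonotoneOn (fun u : ℝ => (|u + a| ^ p + |u - a| ^ p) / 2 - |u| ^ p) (Ici 0) := by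
  have hderiv (x : ℝ) : HasDerivAt (fun x : ℝ => |x| ^ p) (p * (|x| ^ (p - 2) * x)) x := by
    simpa only [mul_assoc] using hasDerivAt_abs_rpow x (one_lt_two.trans_le hp)
  exact monotoneOn_average_translates_sub hderiv ((odd_abs_rpow_mul_self _).const_smul p)
    ((convexOn_Ici_abs_rpow_mul_self (sub_nonneg.2 hp)).smul (zero_le_two.trans hp)) a

/-- For `p ≥ 2`, the function `V(s) = (s^p + |1−s|^p)/2 − 2^{−p} − (s − 1/2)^p` is
nondecreasing on `[1/2, ∞)`; equivalently `V'(s) ≥ 0` for every `s > 1/2`. -/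
theorem V_monotone (p : ℝ) (hp : 2 ≤ p)
    (V : ℝ → ℝ)
    (hV : V = fun s => (s ^ p + |1 - s| ^ p) / 2 - (2:ℝ) ^ (-p) - (s - 1/2) ^ p) :
    MonotoneOn V (Set.Ici (1/2 : ℝ)) ∧ ∀ s : ℝ, 1/2 < s → 0 ≤ deriv V s := by
  let W : ℝ → ℝ := fun u => (|u + 1/2| ^ p + |u - 1/2| ^ p) / 2 - |u| ^ p
  have hVW (s : ℝ) (hs : 1/2 ≤ s) : V s = W (s - 1/2) - 2 ^ (-p) := by
    have hshift : s - 1/2 - 1/2 = s - 1 := by ring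
    simp only [hV, W]
    rw [sub_add_cancel, hshift, abs_sub_comm s 1, abs_of_nonneg (show 0 ≤ s by linarith),
      abs_of_nonneg (sub_nonneg.2 hs), sub_right_comm]
  have hmono : MonotoneOn V (Ici (1/2)) := fun s hs t ht hst => by
    rw [hVW s hs, hVW t ht]
    exact sub_le_sub_right (monotoneOn_average_abs_rpow_sub hp (1/2) (mem_Ici.2 (sub_nonneg.2 hs))
      (mem_Ici.2 (sub_nonneg.2 ht)) (sub_le_sub_right hst _)) _
  refine ⟨hmono, fun s hs => ?_⟩
  rw [← derivWithin_of_mem_nhds (Ici_mem_nhds hs)]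
  exact hmono.derivWithin_nonneg
end

section
/- Let p ∈ [2,∞) and ε ∈ [0,2]. If f, g ∈ L^p([0,1]) satisfy ‖f‖_p = ‖g‖_p = 1 and ‖f−g‖_p ≥ ε, then ‖(f+g)/2‖_p ≤ (1 − (ε/2)^p)^{1/p}. Equivalently, 1 − ‖(f+g)/2‖_p ≥ 1 − (1 − (ε/2)^p)^{1/p}. -/
open MeasureTheory Set

/-!
Clarkson's inequality. Since `t ↦ t ^ (p / 2)` is superadditive and convex on `[0, ∞)`, applying it
to the parallelogram identity gives
`‖x + y‖ ^ p + ‖x - y‖ ^ p ≤ 2 ^ (p - 1) * (‖x‖ ^ p + ‖y‖ ^ p)`, and this inequality can be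
integrated. On the unit ball of `L^p` the right-hand side becomes at most `2 ^ p`, so a lower bound
on `‖f - g‖_p` is an upper bound on `‖f + g‖_p`.
-/

theorem norm_add_rpow_add_norm_sub_rpow_le {E : Type*} [NormedAddCommGroup E]
    [InnerProductSpaceable E] {p : ℝ} (hp : 2 ≤ p) (x y : E) :
    ‖x + y‖ ^ p + ‖x - y‖ ^ p ≤ 2 ^ (p - 1) * (‖x‖ ^ p + ‖y‖ ^ p) := by
  have hq : 1 ≤ p / 2 := by linarith
  have sq_rpow_half (z : E) : (‖z‖ ^ 2) ^ (p / 2) = ‖z‖ ^ p := by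
    rw [← Real.rpow_natCast_mul (norm_nonneg z), Nat.cast_ofNat, mul_div_cancel₀ p two_ne_zero]
  have parallelogram : ‖x + y‖ ^ 2 + ‖x - y‖ ^ 2 = 2 * (‖x‖ ^ 2 + ‖y‖ ^ 2) := by
    simpa only [sq] using InnerProductSpaceable.parallelogram_identity x y
  calc ‖x + y‖ ^ p + ‖x - y‖ ^ p
      = (‖x + y‖ ^ 2) ^ (p / 2) + (‖x - y‖ ^ 2) ^ (p / 2) := by simp only [sq_rpow_half]
    _ ≤ (‖x + y‖ ^ 2 + ‖x - y‖ ^ 2) ^ (p / 2) :=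
        Real.add_rpow_le_rpow_add (sq_nonneg _) (sq_nonneg _) hq
    _ = 2 ^ (p / 2) * (‖x‖ ^ 2 + ‖y‖ ^ 2) ^ (p / 2) := by
        rw [parallelogram, Real.mul_rpow zero_le_two (by positivity)]
    _ ≤ 2 ^ (p / 2) * (2 ^ (p / 2 - 1) * ((‖x‖ ^ 2) ^ (p / 2) + (‖y‖ ^ 2) ^ (p / 2))) := by
        gcongr
        exact_mod_cast NNReal.rpow_add_le_mul_rpow_add_rpow (‖x‖₊ ^ (2 : ℕ)) (‖y‖₊ ^ (2 : ℕ)) hq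
    _ = 2 ^ (p - 1) * (‖x‖ ^ p + ‖y‖ ^ p) := by
        rw [← mul_assoc, ← Real.rpow_add two_pos, sq_rpow_half, sq_rpow_half]
        ring_nf

section Lp

variable {α E : Type*} {m : MeasurableSpace α} {μ : Measure α} [NormedAddCommGroup E] {p : ℝ}
  {f g : α → E}

theorem memLp_ofReal_iff_integrable_norm_rpow (hp : 0 < p) (hf : AEStronglyMeasurable f μ) :
    MemLp f (ENNReal.ofReal p) μ ↔ Integrable (fun t => ‖f t‖ ^ p) μ := by
  rw [← integrable_norm_rpow_iff hf (ENNReal.ofReal_pos.2 hp).ne' ENNReal.ofReal_ne_top,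
    ENNReal.toReal_ofReal hp.le]

variable [InnerProductSpaceable E]

theorem integral_norm_add_rpow_add_integral_norm_sub_rpow_le (hp : 2 ≤ p)
    (hf : MemLp f (ENNReal.ofReal p) μ) (hg : MemLp g (ENNReal.ofReal p) μ) :
    (∫ t, ‖f t + g t‖ ^ p ∂μ) + ∫ t, ‖f t - g t‖ ^ p ∂μ ≤
      2 ^ (p - 1) * ((∫ t, ‖f t‖ ^ p ∂μ) + ∫ t, ‖g t‖ ^ p ∂μ) := by
  have integrable {h : α → E} (hh : MemLp h (ENNReal.ofReal p) μ) :
      Integrable (fun t => ‖h t‖ ^ p) μ :=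
    (memLp_ofReal_iff_integrable_norm_rpow (by positivity) hh.1).1 hh
  have hadd := integrable (hf.add hg)
  have hsub := integrable (hf.sub hg)
  have hfg := (integrable hf).add (integrable hg)
  calc (∫ t, ‖f t + g t‖ ^ p ∂μ) + ∫ t, ‖f t - g t‖ ^ p ∂μ
      = ∫ t, (‖f t + g t‖ ^ p + ‖f t - g t‖ ^ p) ∂μ := (integral_add hadd hsub).symm
    _ ≤ ∫ t, 2 ^ (p - 1) * (‖f t‖ ^ p + ‖g t‖ ^ p) ∂μ :=
        integral_mono (hadd.add hsub) (hfg.const_mul _) fun t =>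
          norm_add_rpow_add_norm_sub_rpow_le hp (f t) (g t)
    _ = 2 ^ (p - 1) * ((∫ t, ‖f t‖ ^ p ∂μ) + ∫ t, ‖g t‖ ^ p ∂μ) := by
        rw [integral_const_mul, integral_add (integrable hf) (integrable hg)]

theorem uniform_convexity_ge_two_general {ε : ℝ} (hp : 2 ≤ p) (hε : 0 ≤ ε)
    (hf : MemLp f (ENNReal.ofReal p) μ) (hg : MemLp g (ENNReal.ofReal p) μ)
    (hf_le : (∫ t, ‖f t‖ ^ p ∂μ) ^ (1 / p) ≤ 1) (hg_le : (∫ t, ‖g t‖ ^ p ∂μ) ^ (1 / p) ≤ 1)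
    (hfg : ε ≤ (∫ t, ‖f t - g t‖ ^ p ∂μ) ^ (1 / p)) :
    (∫ t, (‖f t + g t‖ / 2) ^ p ∂μ) ^ (1 / p) ≤ (1 - (ε / 2) ^ p) ^ (1 / p) := by
  have hp0 : 0 < p := by positivity
  have integral_le_one {h : α → E} (hh : (∫ t, ‖h t‖ ^ p ∂μ) ^ (1 / p) ≤ 1) :
      ∫ t, ‖h t‖ ^ p ∂μ ≤ 1 := by
    rwa [one_div, Real.rpow_inv_le_iff_of_pos (by positivity) zero_le_one hp0,
      Real.one_rpow] at hh
  have le_integral_sub : ε ^ p ≤ ∫ t, ‖f t - g t‖ ^ p ∂μ := by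
    rwa [one_div, Real.le_rpow_inv_iff_of_pos hε (by positivity) hp0] at hfg
  have integral_add_le : ∫ t, ‖f t + g t‖ ^ p ∂μ ≤ 2 ^ p - ε ^ p := by
    have clarkson := integral_norm_add_rpow_add_integral_norm_sub_rpow_le hp hf hg
    have two_rpow : (2 : ℝ) ^ p = 2 ^ (p - 1) * (1 + 1) := by
      rw [one_add_one_eq_two, ← Real.rpow_add_one two_ne_zero, sub_add_cancel]
    have : 2 ^ (p - 1) * ((∫ t, ‖f t‖ ^ p ∂μ) + ∫ t, ‖g t‖ ^ p ∂μ) ≤ 2 ^ (p - 1) * (1 + 1) := by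
      gcongr
      exacts [integral_le_one hf_le, integral_le_one hg_le]
    linarith
  gcongr
  calc ∫ t, (‖f t + g t‖ / 2) ^ p ∂μ
      = (∫ t, ‖f t + g t‖ ^ p ∂μ) / 2 ^ p := by
        simp only [Real.div_rpow (norm_nonneg _) zero_le_two, integral_div]
    _ ≤ (2 ^ p - ε ^ p) / 2 ^ p := by gcongr
    _ = 1 - (ε / 2) ^ p := by
        rw [sub_div, div_self (by positivity), Real.div_rpow hε zero_le_two]

end Lp

/-- Uniform convexity of `L^p([0,1])` for `p ≥ 2`: if `‖f‖_p = ‖g‖_p = 1` and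
`‖f−g‖_p ≥ ε`, then `‖(f+g)/2‖_p ≤ (1 − (ε/2)^p)^{1/p}`. Here
`‖h‖_p = (∫₀¹ |h|^p)^{1/p}`. -/
theorem uniform_convexity_ge_two (p ε : ℝ) (hp : 2 ≤ p) (hε0 : 0 ≤ ε) (hε2 : ε ≤ 2)
    (f g : ℝ → ℝ) (hfm : Measurable f) (hgm : Measurable g)
    (hfi : IntegrableOn (fun t => |f t| ^ p) (Icc 0 1))
    (hgi : IntegrableOn (fun t => |g t| ^ p) (Icc 0 1))
    (hf : (∫ t in Icc (0:ℝ) 1, |f t| ^ p) ^ (1/p) = 1)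
    (hg : (∫ t in Icc (0:ℝ) 1, |g t| ^ p) ^ (1/p) = 1)
    (hfg : ε ≤ (∫ t in Icc (0:ℝ) 1, |f t - g t| ^ p) ^ (1/p)) :
    (∫ t in Icc (0:ℝ) 1, |(f t + g t) / 2| ^ p) ^ (1/p) ≤ (1 - (ε/2) ^ p) ^ (1/p) := by
  have memLp {h : ℝ → ℝ} (hm : Measurable h)
      (hi : IntegrableOn (fun t => |h t| ^ p) (Icc 0 1) volume) :
      MemLp h (ENNReal.ofReal p) (volume.restrict (Icc 0 1)) :=
    (memLp_ofReal_iff_integrable_norm_rpow (by positivity) hm.aestronglyMeasurable).2 hi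
  simpa only [abs_div, abs_two, Real.norm_eq_abs] using
    uniform_convexity_ge_two_general hp hε0 (memLp hfm hfi) (memLp hgm hgi) hf.le hg.le hfg
end

section
/- Let p ∈ [2,∞) and ε ∈ (0,2]. For every η > 0 there exist f, g ∈ L^p([0,1]) with ‖f‖_p = ‖g‖_p = 1 and ‖f−g‖_p ≥ ε such that ‖(f+g)/2‖_p > (1 − (ε/2)^p)^{1/p} − η. -/
open MeasureTheory Set

/-!
Disjointly supported unit vectors `u`, `v` of `L^p` span an isometric copy of the plane with the
norm `(|a|^p + |b|^p)^{1/p}`. In that plane the points `(a, ε/2)` and `(a, -ε/2)` with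
`a^p = 1 - (ε/2)^p` are unit vectors at distance exactly `ε`, and their midpoint `(a, 0)` has norm
exactly `(1 - (ε/2)^p)^{1/p}`; the bound is attained.
-/

section DisjointSupports

variable {α : Type*} {p : ℝ} {u v : α → ℝ}

lemma abs_mul_add_mul_rpow_of_disjoint_support (hp : p ≠ 0)
    (huv : Disjoint (Function.support u) (Function.support v)) (a b : ℝ) (x : α) :
    |a * u x + b * v x| ^ p = |a| ^ p * |u x| ^ p + |b| ^ p * |v x| ^ p := by
  have hx : u x * v x = 0 := by
    by_contra h
    exact huv.ne_of_mem (left_ne_zero_of_mul h) (right_ne_zero_of_mul h) rfl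
  rcases mul_eq_zero.1 hx with h | h <;>
    simp [h, abs_mul, Real.mul_rpow, Real.zero_rpow hp]

variable [MeasurableSpace α] {μ : Measure α}

lemma integrable_abs_mul_add_mul_rpow_of_disjoint_support (hp : p ≠ 0)
    (huv : Disjoint (Function.support u) (Function.support v))
    (hu : Integrable (fun x => |u x| ^ p) μ) (hv : Integrable (fun x => |v x| ^ p) μ) (a b : ℝ) :
    Integrable (fun x => |a * u x + b * v x| ^ p) μ := by
  simp only [abs_mul_add_mul_rpow_of_disjoint_support hp huv]
  exact (hu.const_mul _).add (hv.const_mul _)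

lemma integral_abs_mul_add_mul_rpow_of_disjoint_support (hp : p ≠ 0)
    (huv : Disjoint (Function.support u) (Function.support v))
    (hu : Integrable (fun x => |u x| ^ p) μ) (hv : Integrable (fun x => |v x| ^ p) μ) (a b : ℝ) :
    ∫ x, |a * u x + b * v x| ^ p ∂μ =
      |a| ^ p * ∫ x, |u x| ^ p ∂μ + |b| ^ p * ∫ x, |v x| ^ p ∂μ := by
  simp only [abs_mul_add_mul_rpow_of_disjoint_support hp huv]
  rw [integral_add (hu.const_mul _) (hv.const_mul _), integral_const_mul, integral_const_mul]

end DisjointSupports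

section NormalizedIndicator

variable {α : Type*} [MeasurableSpace α] {μ : Measure α} {p : ℝ} {s t : Set α}

/-- The nonnegative multiple of the indicator function of `s` that is a unit vector of `L^p(μ)`, a
basis vector of the plane in which the extremal pair is built.
If `μ s` is `0` or `∞`, then `μ.real s = 0` and, for `p ≠ 0`, this is the zero function. -/
noncomputable def normalizedIndicator (μ : Measure α) (p : ℝ) (s : Set α) : α → ℝ :=
  s.indicator fun _ => (μ.real s)⁻¹ ^ p⁻¹

lemma measurable_normalizedIndicator (hs : MeasurableSet s) :
    Measurable (normalizedIndicator μ p s) :=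
  measurable_const.indicator hs

lemma abs_normalizedIndicator_rpow (hp : p ≠ 0) :
    (fun x => |normalizedIndicator μ p s x| ^ p) = s.indicator fun _ => (μ.real s)⁻¹ := by
  have hμ : 0 ≤ (μ.real s)⁻¹ := inv_nonneg.2 measureReal_nonneg
  funext x
  by_cases hx : x ∈ s
  · simp only [normalizedIndicator, indicator_of_mem hx, abs_of_nonneg (Real.rpow_nonneg hμ _),
      Real.rpow_inv_rpow hμ hp]
  · simp only [normalizedIndicator, indicator_of_notMem hx, abs_zero, Real.zero_rpow hp]

lemma integrable_abs_normalizedIndicator_rpow (hp : p ≠ 0) (hs : MeasurableSet s) :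
    Integrable (fun x => |normalizedIndicator μ p s x| ^ p) μ := by
  rw [abs_normalizedIndicator_rpow hp]
  rcases eq_or_ne (μ s) ⊤ with hμs | hμs
  · simp [measureReal_def, hμs]
  · exact (integrableOn_const hμs).integrable_indicator hs

lemma integral_abs_normalizedIndicator_rpow (hp : p ≠ 0) (hs : MeasurableSet s)
    (hμs : μ.real s ≠ 0) : ∫ x, |normalizedIndicator μ p s x| ^ p ∂μ = 1 := by
  rw [abs_normalizedIndicator_rpow hp, integral_indicator_const _ hs, smul_eq_mul,
    mul_inv_cancel₀ hμs]

lemma disjoint_support_normalizedIndicator (hst : Disjoint s t) :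
    Disjoint (Function.support (normalizedIndicator μ p s))
      (Function.support (normalizedIndicator μ p t)) :=
  hst.mono support_indicator_subset support_indicator_subset

lemma integrable_abs_mul_normalizedIndicator_add_mul_rpow (hp : p ≠ 0) (hs : MeasurableSet s)
    (ht : MeasurableSet t) (hst : Disjoint s t) (a b : ℝ) :
    Integrable
      (fun x => |a * normalizedIndicator μ p s x + b * normalizedIndicator μ p t x| ^ p) μ :=
  integrable_abs_mul_add_mul_rpow_of_disjoint_support hp
    (disjoint_support_normalizedIndicator hst)
    (integrable_abs_normalizedIndicator_rpow hp hs)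
    (integrable_abs_normalizedIndicator_rpow hp ht) a b

lemma integral_abs_mul_normalizedIndicator_add_mul_rpow (hp : p ≠ 0) (hs : MeasurableSet s)
    (ht : MeasurableSet t) (hst : Disjoint s t) (hμs : μ.real s ≠ 0) (hμt : μ.real t ≠ 0)
    (a b : ℝ) :
    ∫ x, |a * normalizedIndicator μ p s x + b * normalizedIndicator μ p t x| ^ p ∂μ =
      |a| ^ p + |b| ^ p := by
  rw [integral_abs_mul_add_mul_rpow_of_disjoint_support hp
      (disjoint_support_normalizedIndicator hst)
      (integrable_abs_normalizedIndicator_rpow hp hs)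
      (integrable_abs_normalizedIndicator_rpow hp ht),
    integral_abs_normalizedIndicator_rpow hp hs hμs,
    integral_abs_normalizedIndicator_rpow hp ht hμt, mul_one, mul_one]

end NormalizedIndicator

lemma volume_restrict_real_Ioo_ne_zero {a b : ℝ} {S : Set ℝ} (hab : a < b) (hS : Ioo a b ⊆ S) :
    (volume.restrict S).real (Ioo a b) ≠ 0 := by
  rw [measureReal_def, Measure.restrict_eq_self _ hS, ← measureReal_def,
    Real.volume_real_Ioo_of_le hab.le]
  exact (sub_pos.2 hab).ne'

theorem uniform_convexity_ge_two_sharp_general {α : Type*} [MeasurableSpace α] {μ : Measure α}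
    {s t : Set α} (hs : MeasurableSet s) (ht : MeasurableSet t) (hst : Disjoint s t)
    (hμs : μ.real s ≠ 0) (hμt : μ.real t ≠ 0)
    {p ε : ℝ} (hp : 0 < p) (hε0 : 0 ≤ ε) (hε2 : ε ≤ 2) :
    ∃ f g : α → ℝ, Measurable f ∧ Measurable g ∧
      Integrable (fun x => |f x| ^ p) μ ∧
      Integrable (fun x => |g x| ^ p) μ ∧
      (∫ x, |f x| ^ p ∂μ) ^ (1 / p) = 1 ∧
      (∫ x, |g x| ^ p ∂μ) ^ (1 / p) = 1 ∧
      (∫ x, |f x - g x| ^ p ∂μ) ^ (1 / p) = ε ∧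
      (∫ x, |(f x + g x) / 2| ^ p ∂μ) ^ (1 / p) = (1 - (ε / 2) ^ p) ^ (1 / p) := by
  set u := normalizedIndicator μ p s
  set v := normalizedIndicator μ p t
  have hu : Measurable u := measurable_normalizedIndicator hs
  have hv : Measurable v := measurable_normalizedIndicator ht
  have integrable_comb (a b : ℝ) : Integrable (fun x => |a * u x + b * v x| ^ p) μ :=
    integrable_abs_mul_normalizedIndicator_add_mul_rpow hp.ne' hs ht hst a b
  have integral_comb (a b : ℝ) : ∫ x, |a * u x + b * v x| ^ p ∂μ = |a| ^ p + |b| ^ p :=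
    integral_abs_mul_normalizedIndicator_add_mul_rpow hp.ne' hs ht hst hμs hμt a b
  have hc : 0 ≤ 1 - (ε / 2) ^ p :=
    sub_nonneg.2 (Real.rpow_le_one (by linarith) (by linarith) hp.le)
  obtain ⟨a, hap⟩ : ∃ a : ℝ, |a| ^ p = 1 - (ε / 2) ^ p :=
    ⟨(1 - (ε / 2) ^ p) ^ p⁻¹, by
      rw [abs_of_nonneg (Real.rpow_nonneg hc _), Real.rpow_inv_rpow hc hp.ne']⟩
  have hε : |ε / 2| = ε / 2 := abs_of_nonneg (by linarith)
  have hdiff (x : α) : a * u x + ε / 2 * v x - (a * u x + -(ε / 2) * v x) =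
      0 * u x + ε * v x := by ring
  have hmid (x : α) : (a * u x + ε / 2 * v x + (a * u x + -(ε / 2) * v x)) / 2 =
      a * u x + 0 * v x := by ring
  refine ⟨fun x => a * u x + ε / 2 * v x, fun x => a * u x + -(ε / 2) * v x,
    (hu.const_mul _).add (hv.const_mul _), (hu.const_mul _).add (hv.const_mul _),
    integrable_comb _ _, integrable_comb _ _, ?_, ?_, ?_, ?_⟩
  · rw [integral_comb, hap, hε, sub_add_cancel, Real.one_rpow]
  · rw [integral_comb, hap, abs_neg, hε, sub_add_cancel, Real.one_rpow]
  · simp only [hdiff]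
    rw [integral_comb, abs_zero, Real.zero_rpow hp.ne', zero_add, abs_of_nonneg hε0, one_div,
      Real.rpow_rpow_inv hε0 hp.ne']
  · simp only [hmid]
    rw [integral_comb, hap, abs_zero, Real.zero_rpow hp.ne', add_zero]

/-- Sharpness for `p ≥ 2`: for every `η > 0` there are unit vectors `f, g` in
`L^p([0,1])` with `‖f−g‖_p ≥ ε` and `‖(f+g)/2‖_p > (1 − (ε/2)^p)^{1/p} − η`. Here
`‖h‖_p = (∫₀¹ |h|^p)^{1/p}`. -/
theorem uniform_convexity_ge_two_sharp (p ε : ℝ) (hp : 2 ≤ p) (hε0 : 0 < ε) (hε2 : ε ≤ 2)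
    (η : ℝ) (hη : 0 < η) :
    ∃ f g : ℝ → ℝ, Measurable f ∧ Measurable g ∧
      IntegrableOn (fun t => |f t| ^ p) (Icc 0 1) ∧
      IntegrableOn (fun t => |g t| ^ p) (Icc 0 1) ∧
      (∫ t in Icc (0:ℝ) 1, |f t| ^ p) ^ (1/p) = 1 ∧
      (∫ t in Icc (0:ℝ) 1, |g t| ^ p) ^ (1/p) = 1 ∧
      ε ≤ (∫ t in Icc (0:ℝ) 1, |f t - g t| ^ p) ^ (1/p) ∧
      (1 - (ε/2) ^ p) ^ (1/p) - η < (∫ t in Icc (0:ℝ) 1, |(f t + g t) / 2| ^ p) ^ (1/p) := by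
  have hleft : Ioo (0 : ℝ) (1 / 2) ⊆ Icc 0 1 := fun t ht => ⟨ht.1.le, by linarith [ht.2]⟩
  have hright : Ioo (1 / 2 : ℝ) 1 ⊆ Icc 0 1 := fun t ht => ⟨by linarith [ht.1], ht.2.le⟩
  obtain ⟨f, g, hf, hg, hfp, hgp, hf1, hg1, hdist, hmid⟩ :=
    uniform_convexity_ge_two_sharp_general measurableSet_Ioo measurableSet_Ioo (by simp)
      (volume_restrict_real_Ioo_ne_zero (by norm_num) hleft)
      (volume_restrict_real_Ioo_ne_zero (by norm_num) hright)
      (zero_lt_two.trans_le hp) hε0.le hε2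
  exact ⟨f, g, hf, hg, hfp, hgp, hf1, hg1, hdist.ge, hmid ▸ sub_lt_self _ hη⟩
end

section
/- Let p ∈ [2,∞) and ε ∈ (0,2]. Then inf { 1 − ‖(f+g)/2‖_p : f, g ∈ L^p([0,1]), ‖f‖_p = ‖g‖_p = 1, ‖f−g‖_p ≥ ε } = 1 − (1 − (ε/2)^p)^{1/p}. That is, the modulus of uniform convexity of L^p([0,1]) for p ≥ 2 equals δ_{L^p}(ε) = 1 − (1 − (ε/2)^p)^{1/p}. -/
open MeasureTheory Set

/-!
For `r ≥ 2` the parallelogram law, superadditivity of `t ↦ t ^ (r / 2)` and its convexity give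
Clarkson's inequality
`‖(x + y) / 2‖ ^ r + ‖(x - y) / 2‖ ^ r ≤ (‖x‖ ^ r + ‖y‖ ^ r) / 2`
in every inner product space; integrating it gives the same inequality in `L^r`. On unit vectors
with `‖x - y‖ ≥ ε` it reads `‖(x + y) / 2‖ ^ r ≤ 1 - (ε / 2) ^ r`. Equality is attained at
`c • u ± (ε / 2) • v`, where `u`, `v` are unit vectors with disjoint supports and
`c ^ r + (ε / 2) ^ r = 1`.
-/

open scoped ENNReal

section NormedSpace

/-- The modulus of uniform convexity `δ_X(ε)` of a real normed space `X`. It is `0` (an infimum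
over the empty set) when no two unit vectors are at distance at least `ε`. -/
noncomputable def convexityModulus (X : Type*) [NormedAddCommGroup X] [NormedSpace ℝ X]
    (ε : ℝ) : ℝ :=
  sInf {d : ℝ | ∃ x y : X, ‖x‖ = 1 ∧ ‖y‖ = 1 ∧ ε ≤ ‖x - y‖ ∧ d = 1 - ‖(1 / 2 : ℝ) • (x + y)‖}

/-- Clarkson's (first) inequality with exponent `r` for all pairs of vectors of `X`. It passes from
`X` to `X`-valued `L^r` spaces and bounds the modulus of convexity from below. -/
def ClarksonInequality (r : ℝ) (X : Type*) [NormedAddCommGroup X] [NormedSpace ℝ X] : Prop :=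
  ∀ x y : X,
    ‖(1 / 2 : ℝ) • (x + y)‖ ^ r + ‖(1 / 2 : ℝ) • (x - y)‖ ^ r ≤ (‖x‖ ^ r + ‖y‖ ^ r) / 2

variable {X : Type*} [NormedAddCommGroup X] [NormedSpace ℝ X] {r ε : ℝ}

theorem ClarksonInequality.norm_half_add_le (hX : ClarksonInequality r X) (hr : 0 < r)
    (hε : 0 ≤ ε) {x y : X} (hx : ‖x‖ = 1) (hy : ‖y‖ = 1) (hxy : ε ≤ ‖x - y‖) :
    ‖(1 / 2 : ℝ) • (x + y)‖ ≤ (1 - (ε / 2) ^ r) ^ (1 / r) := by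
  have hsub : (ε / 2) ^ r ≤ ‖(1 / 2 : ℝ) • (x - y)‖ ^ r := by
    rw [norm_smul, Real.norm_of_nonneg one_half_pos.le, one_div_mul_eq_div]
    gcongr
  have hclarkson := hX x y
  rw [hx, hy, Real.one_rpow] at hclarkson
  have hadd : ‖(1 / 2 : ℝ) • (x + y)‖ ^ r ≤ 1 - (ε / 2) ^ r := by linarith
  rw [one_div r]
  exact (Real.le_rpow_inv_iff_of_pos (norm_nonneg _)
    ((Real.rpow_nonneg (norm_nonneg _) _).trans hadd) hr).2 hadd

theorem ClarksonInequality.convexityModulus_eq (hX : ClarksonInequality r X) (hr : 0 < r)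
    {u v : X} (huv : ∀ a b : ℝ, ‖a • u + b • v‖ ^ r = |a| ^ r + |b| ^ r)
    (hε0 : 0 ≤ ε) (hε2 : ε ≤ 2) :
    convexityModulus X ε = 1 - (1 - (ε / 2) ^ r) ^ (1 / r) := by
  have hnorm (a b : ℝ) : ‖a • u + b • v‖ = (|a| ^ r + |b| ^ r) ^ r⁻¹ := by
    rw [← huv, Real.rpow_rpow_inv (norm_nonneg _) hr.ne']
  have hεr : 0 ≤ 1 - (ε / 2) ^ r :=
    sub_nonneg.2 (Real.rpow_le_one (by positivity) (by linarith) hr.le)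
  set c : ℝ := (1 - (ε / 2) ^ r) ^ (1 / r) with hc
  have hc0 : 0 ≤ c := Real.rpow_nonneg hεr _
  have hcr : c ^ r = 1 - (ε / 2) ^ r := by rw [hc, one_div, Real.rpow_inv_rpow hεr hr.ne']
  have hunit (b : ℝ) (hb : |b| = ε / 2) : ‖c • u + b • v‖ = 1 := by
    rw [hnorm, hb, abs_of_nonneg hc0, hcr, sub_add_cancel, Real.one_rpow]
  have habs : |ε / 2| = ε / 2 := abs_of_nonneg (by positivity)
  refine IsLeast.csInf_eq ⟨⟨c • u + (ε / 2) • v, c • u + (-(ε / 2)) • v, hunit _ habs,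
    hunit _ (by rw [abs_neg, habs]), ?_, ?_⟩, ?_⟩
  · have hsub : c • u + (ε / 2) • v - (c • u + (-(ε / 2)) • v) = (0 : ℝ) • u + ε • v := by module
    rw [hsub, hnorm, abs_zero, Real.zero_rpow hr.ne', zero_add,
      Real.rpow_rpow_inv (abs_nonneg _) hr.ne']
    exact le_abs_self ε
  · have hadd : (1 / 2 : ℝ) • (c • u + (ε / 2) • v + (c • u + (-(ε / 2)) • v)) =
        c • u + (0 : ℝ) • v := by module
    rw [hadd, hnorm, abs_zero, Real.zero_rpow hr.ne', add_zero,
      Real.rpow_rpow_inv (abs_nonneg _) hr.ne', abs_of_nonneg hc0]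
  · rintro _ ⟨x, y, hx, hy, hxy, rfl⟩
    exact sub_le_sub_left (hX.norm_half_add_le hr hε0 hx hy hxy) 1

end NormedSpace

theorem clarksonInequality_of_innerProductSpace (E : Type*) [NormedAddCommGroup E]
    [InnerProductSpace ℝ E] {r : ℝ} (hr : 2 ≤ r) : ClarksonInequality r E := by
  intro x y
  have hr' : 1 ≤ r / 2 := by linarith
  have hrpow (z : E) : ‖z‖ ^ r = (‖z‖ ^ 2) ^ (r / 2) := by
    rw [← Real.rpow_natCast_mul (norm_nonneg z), Nat.cast_ofNat, mul_div_cancel₀ r two_ne_zero]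
  have hparallelogram : ‖(1 / 2 : ℝ) • (x + y)‖ ^ 2 + ‖(1 / 2 : ℝ) • (x - y)‖ ^ 2 =
      (1 / 2) * ‖x‖ ^ 2 + (1 / 2) * ‖y‖ ^ 2 := by
    rw [norm_smul, norm_smul, Real.norm_of_nonneg one_half_pos.le]
    linarith [parallelogram_law_with_norm ℝ x y]
  simp only [hrpow]
  calc (‖(1 / 2 : ℝ) • (x + y)‖ ^ 2) ^ (r / 2) + (‖(1 / 2 : ℝ) • (x - y)‖ ^ 2) ^ (r / 2)
      ≤ (‖(1 / 2 : ℝ) • (x + y)‖ ^ 2 + ‖(1 / 2 : ℝ) • (x - y)‖ ^ 2) ^ (r / 2) :=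
        Real.add_rpow_le_rpow_add (sq_nonneg _) (sq_nonneg _) hr'
    _ = ((1 / 2) * ‖x‖ ^ 2 + (1 / 2) * ‖y‖ ^ 2) ^ (r / 2) := by rw [hparallelogram]
    _ ≤ (1 / 2) * (‖x‖ ^ 2) ^ (r / 2) + (1 / 2) * (‖y‖ ^ 2) ^ (r / 2) :=
        (convexOn_rpow hr').2 (sq_nonneg ‖x‖) (sq_nonneg ‖y‖) one_half_pos.le one_half_pos.le
          (add_halves 1)
    _ = ((‖x‖ ^ 2) ^ (r / 2) + (‖y‖ ^ 2) ^ (r / 2)) / 2 := by ring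

section Lp

variable {α E : Type*} [MeasurableSpace α] {μ : Measure α} [NormedAddCommGroup E] {p : ℝ≥0∞}

theorem norm_Lp_eq_integral_of_ae_eq (hp0 : p ≠ 0) (hp : p ≠ ∞) {f : Lp E p μ} {g : α → E}
    (hfg : f =ᵐ[μ] g) : ‖f‖ = (∫ t, ‖g t‖ ^ p.toReal ∂μ) ^ (1 / p.toReal) := by
  have hg : AEStronglyMeasurable g μ := (Lp.aestronglyMeasurable f).congr hfg
  rw [Lp.norm_def, eLpNorm_congr_ae hfg, toReal_eLpNorm hg,
    lpNorm_eq_integral_norm_rpow_toReal hp0 hp hg, one_div]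

theorem norm_Lp_rpow_eq_integral_of_ae_eq (hp0 : p ≠ 0) (hp : p ≠ ∞) {f : Lp E p μ} {g : α → E}
    (hfg : f =ᵐ[μ] g) : ‖f‖ ^ p.toReal = ∫ t, ‖g t‖ ^ p.toReal ∂μ := by
  rw [norm_Lp_eq_integral_of_ae_eq hp0 hp hfg, one_div,
    Real.rpow_inv_rpow (integral_nonneg fun t ↦ by positivity)
      (ENNReal.toReal_ne_zero.2 ⟨hp0, hp⟩)]

theorem integrable_norm_rpow_Lp (hp0 : p ≠ 0) (hp : p ≠ ∞) (f : Lp E p μ) :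
    Integrable (fun t ↦ ‖f t‖ ^ p.toReal) μ :=
  (Lp.memLp f).integrable_norm_rpow hp0 hp

theorem norm_Lp_add_rpow_of_disjoint (hp0 : p ≠ 0) (hp : p ≠ ∞) {f g : Lp E p μ}
    (hfg : ∀ᵐ t ∂μ, f t = 0 ∨ g t = 0) :
    ‖f + g‖ ^ p.toReal = ‖f‖ ^ p.toReal + ‖g‖ ^ p.toReal := by
  have hp' : p.toReal ≠ 0 := ENNReal.toReal_ne_zero.2 ⟨hp0, hp⟩
  rw [norm_Lp_rpow_eq_integral_of_ae_eq hp0 hp (Lp.coeFn_add f g),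
    norm_Lp_rpow_eq_integral_of_ae_eq hp0 hp (Filter.EventuallyEq.refl _ f),
    norm_Lp_rpow_eq_integral_of_ae_eq hp0 hp (Filter.EventuallyEq.refl _ g),
    ← integral_add (integrable_norm_rpow_Lp hp0 hp f) (integrable_norm_rpow_Lp hp0 hp g)]
  refine integral_congr_ae ?_
  filter_upwards [hfg] with t ht
  rcases ht with hf | hg
  · simp only [Pi.add_apply, hf, zero_add, norm_zero, Real.zero_rpow hp']
  · simp only [Pi.add_apply, hg, add_zero, norm_zero, Real.zero_rpow hp']

variable [NormedSpace ℝ E] [Fact (1 ≤ p)]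

theorem clarksonInequality_Lp (hE : ClarksonInequality p.toReal E) (hp : p ≠ ∞) :
    ClarksonInequality p.toReal (Lp E p μ) := by
  intro f g
  have hp0 : p ≠ 0 := (zero_lt_one.trans_le Fact.out).ne'
  have hadd : ⇑((1 / 2 : ℝ) • (f + g)) =ᵐ[μ] fun t ↦ (1 / 2 : ℝ) • (f t + g t) :=
    (Lp.coeFn_smul _ _).trans ((Lp.coeFn_add f g).const_smul _)
  have hsub : ⇑((1 / 2 : ℝ) • (f - g)) =ᵐ[μ] fun t ↦ (1 / 2 : ℝ) • (f t - g t) :=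
    (Lp.coeFn_smul _ _).trans ((Lp.coeFn_sub f g).const_smul _)
  have hf := integrable_norm_rpow_Lp hp0 hp f
  have hg := integrable_norm_rpow_Lp hp0 hp g
  have hadd_int := integrable_norm_rpow_Lp hp0 hp ((1 / 2 : ℝ) • (f + g))
  have hsub_int := integrable_norm_rpow_Lp hp0 hp ((1 / 2 : ℝ) • (f - g))
  simp only [norm_Lp_rpow_eq_integral_of_ae_eq hp0 hp (Filter.EventuallyEq.refl _ _)]
  rw [← integral_add hadd_int hsub_int, ← integral_add hf hg, ← integral_div]
  refine integral_mono_ae (hadd_int.add hsub_int) ((hf.add hg).div_const 2) ?_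
  filter_upwards [hadd, hsub] with t ht_add ht_sub
  rw [ht_add, ht_sub]
  exact hE (f t) (g t)

theorem norm_Lp_smul_add_smul_rpow_of_disjoint (hp : p ≠ ∞) {u v : Lp E p μ} (hu : ‖u‖ = 1)
    (hv : ‖v‖ = 1) (huv : ∀ᵐ t ∂μ, u t = 0 ∨ v t = 0) (a b : ℝ) :
    ‖a • u + b • v‖ ^ p.toReal = |a| ^ p.toReal + |b| ^ p.toReal := by
  have hp0 : p ≠ 0 := (zero_lt_one.trans_le Fact.out).ne'
  rw [norm_Lp_add_rpow_of_disjoint hp0 hp, norm_smul, norm_smul, hu, hv, mul_one, mul_one,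
    Real.norm_eq_abs, Real.norm_eq_abs]
  filter_upwards [huv, Lp.coeFn_smul a u, Lp.coeFn_smul b v] with t ht hau hbv
  rw [hau, hbv]
  exact ht.imp (smul_eq_zero_of_right a) (smul_eq_zero_of_right b)

theorem exists_norm_Lp_eq_one_of_measure_ne_zero [Nontrivial E] (hp : p ≠ ∞) {A : Set α}
    (hA : MeasurableSet A) (hA0 : μ A ≠ 0) (hA_top : μ A ≠ ∞) :
    ∃ u : Lp E p μ, ‖u‖ = 1 ∧ ∀ᵐ t ∂μ, t ∉ A → u t = 0 := by
  have hp0 : p ≠ 0 := (zero_lt_one.trans_le Fact.out).ne'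
  have hμA : 0 < μ.real A := ENNReal.toReal_pos hA0 hA_top
  obtain ⟨e, he⟩ := exists_norm_eq E (Real.rpow_nonneg hμA.le (-(1 / p.toReal)))
  refine ⟨indicatorConstLp p hA hA_top e, ?_, ?_⟩
  · rw [norm_indicatorConstLp hp0 hp, he, ← Real.rpow_add hμA, neg_add_cancel, Real.rpow_zero]
  · filter_upwards [indicatorConstLp_coeFn (p := p) (hs := hA) (hμs := hA_top) (c := e)]
      with t ht htA
    rw [ht, indicator_of_notMem htA]

end Lp

theorem convexityModulus_Lp_real_eq_sInf {α : Type*} [MeasurableSpace α] (μ : Measure α)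
    {p : ℝ≥0∞} [Fact (1 ≤ p)] (hp : p ≠ ∞) (ε : ℝ) :
    convexityModulus (Lp ℝ p μ) ε =
      sInf {d : ℝ | ∃ f g : α → ℝ, Measurable f ∧ Measurable g ∧
        Integrable (fun t ↦ |f t| ^ p.toReal) μ ∧
        Integrable (fun t ↦ |g t| ^ p.toReal) μ ∧
        (∫ t, |f t| ^ p.toReal ∂μ) ^ (1 / p.toReal) = 1 ∧
        (∫ t, |g t| ^ p.toReal ∂μ) ^ (1 / p.toReal) = 1 ∧
        ε ≤ (∫ t, |f t - g t| ^ p.toReal ∂μ) ^ (1 / p.toReal) ∧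
        d = 1 - (∫ t, |(f t + g t) / 2| ^ p.toReal ∂μ) ^ (1 / p.toReal)} := by
  have hp0 : p ≠ 0 := (zero_lt_one.trans_le Fact.out).ne'
  have hnorm {F : Lp ℝ p μ} {f : α → ℝ} (hF : F =ᵐ[μ] f) :
      ‖F‖ = (∫ t, |f t| ^ p.toReal ∂μ) ^ (1 / p.toReal) :=
    norm_Lp_eq_integral_of_ae_eq hp0 hp hF
  have hsub {F G : Lp ℝ p μ} {f g : α → ℝ} (hF : F =ᵐ[μ] f) (hG : G =ᵐ[μ] g) :
      ‖F - G‖ = (∫ t, |f t - g t| ^ p.toReal ∂μ) ^ (1 / p.toReal) :=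
    hnorm ((Lp.coeFn_sub F G).trans (hF.sub hG))
  have hmid {F G : Lp ℝ p μ} {f g : α → ℝ} (hF : F =ᵐ[μ] f) (hG : G =ᵐ[μ] g) :
      ‖(1 / 2 : ℝ) • (F + G)‖ = (∫ t, |(f t + g t) / 2| ^ p.toReal ∂μ) ^ (1 / p.toReal) := by
    refine hnorm ?_
    filter_upwards [Lp.coeFn_smul (1 / 2 : ℝ) (F + G), Lp.coeFn_add F G, hF, hG]
      with t hsmul hadd hFt hGt
    rw [hsmul, Pi.smul_apply, hadd, Pi.add_apply, hFt, hGt, smul_eq_mul, one_div_mul_eq_div]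
  have hmemLp {f : α → ℝ} (hf : Measurable f) (hfi : Integrable (fun t ↦ |f t| ^ p.toReal) μ) :
      MemLp f p μ :=
    (integrable_norm_rpow_iff hf.aestronglyMeasurable hp0 hp).1 hfi
  unfold convexityModulus
  congr 1
  ext d
  constructor
  · rintro ⟨F, G, hF, hG, hFG, rfl⟩
    have hFF := Filter.EventuallyEq.refl (ae μ) F
    have hGG := Filter.EventuallyEq.refl (ae μ) G
    exact ⟨F, G, (Lp.stronglyMeasurable F).measurable, (Lp.stronglyMeasurable G).measurable,
      integrable_norm_rpow_Lp hp0 hp F, integrable_norm_rpow_Lp hp0 hp G, hnorm hFF ▸ hF,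
      hnorm hGG ▸ hG, hsub hFF hGG ▸ hFG, by rw [hmid hFF hGG]⟩
  · rintro ⟨f, g, hf, hg, hfi, hgi, hf1, hg1, hfg, rfl⟩
    have hF := (hmemLp hf hfi).coeFn_toLp
    have hG := (hmemLp hg hgi).coeFn_toLp
    exact ⟨_, _, (hnorm hF).trans hf1, (hnorm hG).trans hg1, (hsub hF hG).symm ▸ hfg,
      by rw [hmid hF hG]⟩

theorem volume_restrict_Icc_Ioo_ne_zero {a b c d : ℝ} (hac : a ≤ c) (hcd : c < d) (hdb : d ≤ b) :
    volume.restrict (Icc a b) (Ioo c d) ≠ 0 := by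
  rw [Measure.restrict_eq_self _ (Ioo_subset_Icc_self.trans (Icc_subset_Icc hac hdb))]
  exact (Measure.measure_Ioo_pos volume).2 hcd |>.ne'

theorem modulus_of_convexity_ge_two_general {α E : Type*} [MeasurableSpace α] {μ : Measure α}
    [NormedAddCommGroup E] [InnerProductSpace ℝ E] [Nontrivial E] {p : ℝ≥0∞} [Fact (1 ≤ p)]
    (hp2 : 2 ≤ p) (hp : p ≠ ∞) {A B : Set α} (hA : MeasurableSet A) (hB : MeasurableSet B)
    (hAB : Disjoint A B) (hA0 : μ A ≠ 0) (hA_top : μ A ≠ ∞) (hB0 : μ B ≠ 0) (hB_top : μ B ≠ ∞)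
    {ε : ℝ} (hε0 : 0 ≤ ε) (hε2 : ε ≤ 2) :
    convexityModulus (Lp E p μ) ε = 1 - (1 - (ε / 2) ^ p.toReal) ^ (1 / p.toReal) := by
  have hr : 2 ≤ p.toReal := (ENNReal.ofReal_le_iff_le_toReal hp).1 (by simpa using hp2)
  obtain ⟨u, hu, huA⟩ := exists_norm_Lp_eq_one_of_measure_ne_zero (E := E) hp hA hA0 hA_top
  obtain ⟨v, hv, hvB⟩ := exists_norm_Lp_eq_one_of_measure_ne_zero (E := E) hp hB hB0 hB_top
  have huv : ∀ᵐ t ∂μ, u t = 0 ∨ v t = 0 := by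
    filter_upwards [huA, hvB] with t htA htB
    exact (em (t ∈ A)).symm.imp htA fun h ↦ htB (disjoint_left.1 hAB h)
  have hclarkson : ClarksonInequality p.toReal (Lp E p μ) :=
    clarksonInequality_Lp (clarksonInequality_of_innerProductSpace E hr) hp
  exact hclarkson.convexityModulus_eq (by linarith)
    (norm_Lp_smul_add_smul_rpow_of_disjoint hp hu hv huv) hε0 hε2

/-- The modulus of uniform convexity of `L^p([0,1])` for `p ≥ 2` equals
`1 − (1 − (ε/2)^p)^{1/p}`. Here `‖h‖_p = (∫₀¹ |h|^p)^{1/p}`. -/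
theorem modulus_of_convexity_ge_two (p ε : ℝ) (hp : 2 ≤ p) (hε0 : 0 < ε) (hε2 : ε ≤ 2) :
    sInf {d : ℝ | ∃ f g : ℝ → ℝ, Measurable f ∧ Measurable g ∧
        IntegrableOn (fun t => |f t| ^ p) (Icc 0 1) ∧
        IntegrableOn (fun t => |g t| ^ p) (Icc 0 1) ∧
        (∫ t in Icc (0:ℝ) 1, |f t| ^ p) ^ (1/p) = 1 ∧
        (∫ t in Icc (0:ℝ) 1, |g t| ^ p) ^ (1/p) = 1 ∧
        ε ≤ (∫ t in Icc (0:ℝ) 1, |f t - g t| ^ p) ^ (1/p) ∧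
        d = 1 - (∫ t in Icc (0:ℝ) 1, |(f t + g t) / 2| ^ p) ^ (1/p)}
      = 1 - (1 - (ε/2) ^ p) ^ (1/p) := by
  have hp1 : Fact (1 ≤ ENNReal.ofReal p) := ⟨ENNReal.one_le_ofReal.2 (one_le_two.trans hp)⟩
  have hp2 : 2 ≤ ENNReal.ofReal p := by simpa using ENNReal.ofReal_le_ofReal hp
  have hmodulus := modulus_of_convexity_ge_two_general (E := ℝ) hp2 ENNReal.ofReal_ne_top
    measurableSet_Ioo measurableSet_Ioo
    (Ioo_disjoint_Ioo.2 ((min_le_left _ _).trans (le_max_right _ _)))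
    (volume_restrict_Icc_Ioo_ne_zero le_rfl (one_half_pos (α := ℝ)) one_half_lt_one.le)
    (measure_ne_top _ _)
    (volume_restrict_Icc_Ioo_ne_zero one_half_pos.le one_half_lt_one le_rfl)
    (measure_ne_top _ _) hε0.le hε2
  rwa [convexityModulus_Lp_real_eq_sInf _ ENNReal.ofReal_ne_top,
    ENNReal.toReal_ofReal (zero_le_two.trans hp)] at hmodulus
end

section
/- Let p ∈ (1,2) be a real number. Then for every t ≥ 1/2 one has (t − 1/2)·(t^{p−1} − sgn(1−t)·|1−t|^{p−1}) ≤ t^p + |1−t|^p, where sgn denotes the sign function with sgn(0) = 0. Equivalently, with f(s) = (s^{1/p} − 1/2)^p and g(s) = |1 − s^{1/p}|^p, one has f(s)(1 + g'(s)) − f'(s)(s + g(s)) ≤ 0 for all s ≥ 2^{−p}. -/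
/-!
Put `S = sgn(1 - t) |1 - t|^(p-1)`, so that `|1 - t|^p = (1 - t) S`. For any `c` in place of `1/2`,
the right-hand side then exceeds the left-hand side by exactly `c t^(p-1) + (1 - c) S`. Only `t > 1`
makes `S` negative, and there `|S| = (t - 1)^(p-1) ≤ t^(p-1)`; hence for `c ≤ 1` the excess is at
least `(2c - 1) t^(p-1)`, which is nonnegative once `1/2 ≤ c`.
-/

theorem self_mul_real_sign (x : ℝ) : x * Real.sign x = |x| := by
  rcases lt_trichotomy x 0 with hx | rfl | hx
  · rw [abs_of_neg hx, Real.sign_of_neg hx, mul_neg_one]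
  · rw [abs_zero, zero_mul]
  · rw [abs_of_pos hx, Real.sign_of_pos hx, mul_one]

theorem real_sign_nonneg {x : ℝ} (hx : 0 ≤ x) : 0 ≤ Real.sign x := by
  rcases hx.eq_or_lt with rfl | hx
  · exact Real.sign_zero.ge
  · exact zero_le_one.trans_eq (Real.sign_of_pos hx).symm

theorem self_mul_rpow_sub_one {p x : ℝ} (hp : p ≠ 0) (hx : 0 ≤ x) :
    x * x ^ (p - 1) = x ^ p := by
  rw [← Real.rpow_one_add' hx (by rwa [add_sub_cancel]), add_sub_cancel]

theorem self_mul_sign_mul_abs_rpow_sub_one {p : ℝ} (hp : p ≠ 0) (x : ℝ) :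
    x * (Real.sign x * |x| ^ (p - 1)) = |x| ^ p := by
  rw [← mul_assoc, self_mul_real_sign, self_mul_rpow_sub_one hp (abs_nonneg x)]

theorem neg_rpow_le_sign_mul_abs_rpow {q x y : ℝ} (hq : 0 ≤ q) (hx : 0 ≤ x) (hxy : -x ≤ y) :
    -x ^ q ≤ Real.sign y * |y| ^ q := by
  rcases lt_or_ge y 0 with hy | hy
  · rw [Real.sign_of_neg hy, neg_one_mul, neg_le_neg_iff]
    exact Real.rpow_le_rpow (abs_nonneg y) (abs_le.2 ⟨hxy, hy.le.trans hx⟩) hq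
  · calc -x ^ q ≤ 0 := neg_nonpos.2 (Real.rpow_nonneg hx q)
      _ ≤ Real.sign y * |y| ^ q :=
        mul_nonneg (real_sign_nonneg hy) (Real.rpow_nonneg (abs_nonneg y) q)

theorem rpow_add_abs_one_sub_rpow_sub_tangent_slope {p t : ℝ} (hp : p ≠ 0) (ht : 0 ≤ t) (c : ℝ) :
    t ^ p + |1 - t| ^ p
        - (t - c) * (t ^ (p - 1) - Real.sign (1 - t) * |1 - t| ^ (p - 1))
      = c * t ^ (p - 1) + (1 - c) * (Real.sign (1 - t) * |1 - t| ^ (p - 1)) := by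
  rw [← self_mul_rpow_sub_one hp ht, ← self_mul_sign_mul_abs_rpow_sub_one hp (1 - t)]
  ring

theorem tangent_slope_inequality_general {p t c : ℝ} (hp : 1 ≤ p) (ht : 0 ≤ t)
    (hc : 1 / 2 ≤ c) (hc1 : c ≤ 1) :
    (t - c) * (t ^ (p - 1) - Real.sign (1 - t) * |1 - t| ^ (p - 1))
      ≤ t ^ p + |1 - t| ^ p := by
  have neg_rpow_le : -t ^ (p - 1) ≤ Real.sign (1 - t) * |1 - t| ^ (p - 1) :=
    neg_rpow_le_sign_mul_abs_rpow (sub_nonneg.2 hp) ht (by linarith)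
  rw [← sub_nonneg,
    rpow_add_abs_one_sub_rpow_sub_tangent_slope (zero_lt_one.trans_le hp).ne' ht]
  calc 0 ≤ (2 * c - 1) * t ^ (p - 1) :=
        mul_nonneg (by linarith) (Real.rpow_nonneg ht _)
    _ = c * t ^ (p - 1) + (1 - c) * -t ^ (p - 1) := by ring
    _ ≤ c * t ^ (p - 1) + (1 - c) * (Real.sign (1 - t) * |1 - t| ^ (p - 1)) := by gcongr

/-- For `1 < p < 2` and `t ≥ 1/2`:
`(t − 1/2)·(t^{p−1} − sgn(1−t)·|1−t|^{p−1}) ≤ t^p + |1−t|^p`. -/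
theorem tangent_slope_inequality (p t : ℝ) (hp1 : 1 < p) (hp2 : p < 2) (ht : 1/2 ≤ t) :
    (t - 1/2) * (t ^ (p - 1) - Real.sign (1 - t) * |1 - t| ^ (p - 1))
      ≤ t ^ p + |1 - t| ^ p :=
  tangent_slope_inequality_general hp1.le (by linarith) le_rfl (by norm_num)
end

section
/- Let p ∈ (1,2) be a real number. Then for every t > 1/2 the quantity t^{p−1} − sgn(1−t)·|1−t|^{p−1} is strictly positive (where sgn(0) = 0), and the function h(t) = (t − 1/2)^{p−1} / (t^{p−1} − sgn(1−t)·|1−t|^{p−1}) is nonincreasing on (1/2, ∞). Equivalently, with f(s) = (s^{1/p} − 1/2)^p and g(s) = |1 − s^{1/p}|^p, one has 1 + g'(s) > 0 and s ↦ f'(s)/(1 + g'(s)) is nonincreasing for s > 2^{−p}. -/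
/-!
Put `a = p - 1` and let `S x = sign x * |x| ^ a`, which is odd, positively homogeneous of degree
`a`, and concave on `[0, ∞)`. Factoring `u = t - 1/2` out of `t = u + 1/2` and `1 - t = 1/2 - u`
gives `1 / h(t) = S (x + 1) - S (x - 1)` with `x = (2 * t - 1)⁻¹`. A central difference of an odd
function that is concave on `[0, ∞)` decreases there, and `x` decreases in `t`, so `h` decreases.
-/

open Set

section Concave

variable {𝕜 β : Type*} [Field 𝕜] [LinearOrder 𝕜] [IsStrictOrderedRing 𝕜]
  [AddCommGroup β] [PartialOrder β] [IsOrderedAddMonoid β] [Module 𝕜 β] {f : 𝕜 → β}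

theorem map_add_map_le_of_concaveOn {s : Set 𝕜} (hf : ConcaveOn 𝕜 s f) {a b c d : 𝕜}
    (ha : a ∈ s) (hd : d ∈ s) (hab : a ≤ b) (hac : a ≤ c) (h : a + d = b + c) :
    f a + f d ≤ f b + f c := by
  obtain ⟨v, w, hv, hw, hvw, hb⟩ : b ∈ segment 𝕜 a d := Icc_subset_segment ⟨hab, by linarith⟩
  have hc : w • a + v • d = c := by
    simp only [smul_eq_mul] at hb ⊢
    linear_combination h - hb + (a + d) * hvw
  calc f a + f d = (v • f a + w • f d) + (w • f a + v • f d) := by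
        rw [add_add_add_comm, ← add_smul, ← add_smul, add_comm w v, hvw, one_smul, one_smul]
    _ ≤ f b + f c := by
        rw [← hb, ← hc]
        exact add_le_add (hf.2 ha hd hv hw hvw) (hf.2 ha hd hw hv (by rwa [add_comm]))

theorem antitoneOn_centralDifference_of_odd_of_concaveOn (hodd : f.Odd)
    (hf : ConcaveOn 𝕜 (Ici 0) f) {r : 𝕜} (hr : 0 ≤ r) :
    AntitoneOn (fun x ↦ f (x + r) - f (x - r)) (Ici 0) := by
  have below : AntitoneOn (fun x ↦ f (x + r) - f (x - r)) (Icc 0 r) := by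
    intro x hx y hy hxy
    have reflect (z : 𝕜) : f (z + r) - f (z - r) = f (r - z) + f (r + z) := by
      rw [← neg_sub r z, hodd.eq, sub_neg_eq_add, add_comm, add_comm z]
    simp only [reflect]
    exact map_add_map_le_of_concaveOn hf (sub_nonneg.2 hy.2) (add_nonneg hr hy.1)
      (by linarith) (by linarith [hx.1]) (by ring)
  have above : AntitoneOn (fun x ↦ f (x + r) - f (x - r)) (Ici r) := by
    intro x hx y hy hxy
    rw [mem_Ici] at hx hy
    rw [sub_le_sub_iff, add_comm (f (y + r)), add_comm (f (x + r))]
    exact map_add_map_le_of_concaveOn hf (sub_nonneg.2 hx) (by rw [mem_Ici]; linarith)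
      (by linarith) (by linarith) (by ring)
  rw [← Icc_union_Ici_eq_Ici hr]
  exact below.union_right above (isGreatest_Icc hr) isLeast_Ici

end Concave

/-- The signed power `x ↦ sign x * |x| ^ a`. It is the odd extension of the real power `x ^ a`
on `[0, ∞)` for `a ≠ 0`; its value at `x = 0` is `0` for every `a`. -/
noncomputable def signedRpow (a x : ℝ) : ℝ :=
  Real.sign x * |x| ^ a

section SignedRpow

variable {a : ℝ}

theorem signedRpow_of_nonneg (ha : a ≠ 0) {x : ℝ} (hx : 0 ≤ x) : signedRpow a x = x ^ a := by
  rcases hx.eq_or_lt with rfl | hx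
  · simp [signedRpow, Real.zero_rpow ha]
  · rw [signedRpow, Real.sign_of_pos hx, abs_of_pos hx, one_mul]

theorem odd_signedRpow (a : ℝ) : (signedRpow a).Odd := fun x ↦ by
  rw [signedRpow, signedRpow, Real.sign_neg, abs_neg, neg_mul]

theorem signedRpow_mul_of_pos (a : ℝ) {u : ℝ} (hu : 0 < u) (x : ℝ) :
    signedRpow a (u * x) = u ^ a * signedRpow a x := by
  have sign_mul : Real.sign (u * x) = Real.sign x := by
    rcases lt_trichotomy x 0 with hx | rfl | hx
    · rw [Real.sign_of_neg hx, Real.sign_of_neg (mul_neg_of_pos_of_neg hu hx)]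
    · rw [mul_zero]
    · rw [Real.sign_of_pos hx, Real.sign_of_pos (mul_pos hu hx)]
  rw [signedRpow, signedRpow, sign_mul, abs_mul, abs_of_pos hu,
    Real.mul_rpow hu.le (abs_nonneg x), mul_left_comm]

theorem strictMono_signedRpow (ha : 0 < a) : StrictMono (signedRpow a) :=
  strictMono_of_odd_strictMonoOn_nonneg (odd_signedRpow a) <|
    (Real.strictMonoOn_rpow_Ici_of_exponent_pos ha).congr
      fun _ hx ↦ (signedRpow_of_nonneg ha.ne' hx).symm

theorem concaveOn_signedRpow (ha₀ : 0 < a) (ha₁ : a ≤ 1) :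
    ConcaveOn ℝ (Ici 0) (signedRpow a) :=
  (Real.concaveOn_rpow ha₀.le ha₁).congr fun _ hx ↦ (signedRpow_of_nonneg ha₀.ne' hx).symm

theorem signedRpow_one_sub_lt_rpow (ha : 0 < a) {t : ℝ} (ht : 1 / 2 < t) :
    signedRpow a (1 - t) < t ^ a := by
  rw [← signedRpow_of_nonneg ha.ne' (by linarith : 0 ≤ t)]
  exact strictMono_signedRpow ha (by linarith)

theorem rpow_sub_signedRpow_one_sub (ha : a ≠ 0) {t : ℝ} (ht : 1 / 2 < t) :
    t ^ a - signedRpow a (1 - t) = (t - 1 / 2) ^ a *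
      (signedRpow a ((2 * t - 1)⁻¹ + 1) - signedRpow a ((2 * t - 1)⁻¹ - 1)) := by
  have hu : 0 < t - 1 / 2 := by linarith
  have hinv : (2 * t - 1) * (2 * t - 1)⁻¹ = 1 := mul_inv_cancel₀ (by linarith)
  have ht_eq : (t - 1 / 2) * ((2 * t - 1)⁻¹ + 1) = t := by linear_combination hinv / 2
  have hsub_eq : (t - 1 / 2) * ((2 * t - 1)⁻¹ - 1) = 1 - t := by linear_combination hinv / 2
  rw [mul_sub, ← signedRpow_mul_of_pos a hu, ← signedRpow_mul_of_pos a hu, ht_eq, hsub_eq,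
    signedRpow_of_nonneg ha (by linarith : 0 ≤ t)]

theorem monotoneOn_rpow_sub_signedRpow_div (ha₀ : 0 < a) (ha₁ : a ≤ 1) :
    MonotoneOn (fun t ↦ (t ^ a - signedRpow a (1 - t)) / (t - 1 / 2) ^ a) (Ioi (1 / 2)) := by
  have central : EqOn
      (fun t ↦ signedRpow a ((2 * t - 1)⁻¹ + 1) - signedRpow a ((2 * t - 1)⁻¹ - 1))
      (fun t ↦ (t ^ a - signedRpow a (1 - t)) / (t - 1 / 2) ^ a) (Ioi (1 / 2)) := by
    intro t ht
    simp only [rpow_sub_signedRpow_one_sub ha₀.ne' ht]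
    exact (mul_div_cancel_left₀ _ (Real.rpow_pos_of_pos (sub_pos.2 ht) a).ne').symm
  have two_mul_sub_one_pos {t : ℝ} (ht : 1 / 2 < t) : 0 < 2 * t - 1 := by linarith
  refine MonotoneOn.congr (fun s hs t ht hst ↦ ?_) central
  exact antitoneOn_centralDifference_of_odd_of_concaveOn (odd_signedRpow a)
    (concaveOn_signedRpow ha₀ ha₁) zero_le_one (inv_nonneg.2 (two_mul_sub_one_pos ht).le)
    (inv_nonneg.2 (two_mul_sub_one_pos hs).le) (inv_anti₀ (two_mul_sub_one_pos hs) (by linarith))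

end SignedRpow

/-- For `1 < p < 2`, the quantity `t^{p−1} − sgn(1−t)·|1−t|^{p−1}` is strictly positive
for `t > 1/2`, and `h(t) = (t − 1/2)^{p−1} / (t^{p−1} − sgn(1−t)·|1−t|^{p−1})` is
nonincreasing on `(1/2, ∞)`. -/
theorem slope_positive_and_antitone (p : ℝ) (hp1 : 1 < p) (hp2 : p < 2) :
    (∀ t : ℝ, 1/2 < t → 0 < t ^ (p - 1) - Real.sign (1 - t) * |1 - t| ^ (p - 1)) ∧
    AntitoneOn (fun t : ℝ =>
        (t - 1/2) ^ (p - 1) / (t ^ (p - 1) - Real.sign (1 - t) * |1 - t| ^ (p - 1)))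
      (Set.Ioi (1/2 : ℝ)) := by
  have ha : 0 < p - 1 := sub_pos.2 hp1
  have denom_pos (t : ℝ) (ht : 1 / 2 < t) : 0 < t ^ (p - 1) - signedRpow (p - 1) (1 - t) :=
    sub_pos.2 (signedRpow_one_sub_lt_rpow ha ht)
  refine ⟨denom_pos, fun s hs t ht hst ↦ ?_⟩
  have inv_slope_le := monotoneOn_rpow_sub_signedRpow_div ha (by linarith) hs ht hst
  have inv_slope_pos := div_pos (denom_pos s hs) (Real.rpow_pos_of_pos (sub_pos.2 hs) (p - 1))
  simpa only [inv_div, signedRpow] using inv_anti₀ inv_slope_pos inv_slope_le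
end

section
/- Let p ∈ (1,2) and ε ∈ (0,2]. Suppose δ ∈ [0,1] satisfies (1 − δ + ε/2)^p + |1 − δ − ε/2|^p = 2. If f, g ∈ L^p([0,1]) satisfy ‖f‖_p = ‖g‖_p = 1 and ‖f−g‖_p ≥ ε, then ‖(f+g)/2‖_p ≤ 1 − δ. -/
open MeasureTheory Set

/-!
Hanner's inequality `(‖u‖ + ‖v‖) ^ p + |‖u‖ - ‖v‖| ^ p ≤ ‖u + v‖ ^ p + ‖u - v‖ ^ p` holds in `L^p`
for `1 < p ≤ 2`. The values of `u` and `v` satisfy it pointwise, by the parallelogram law and the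
concavity of `t ↦ t ^ (p / 2)`. Its left side, as a function of `(‖u‖ ^ p, ‖v‖ ^ p)`, is positively
homogeneous and convex, so it lies above a linear function touching it at any prescribed point, and
integrating that linear lower bound passes from pointwise norms to `L^p` norms. Applied to
`u = (f + g) / 2` and `v = (f - g) / 2`, the inequality bounds the left side by `2`; as the left
side is strictly increasing in `‖u‖` and increasing in `‖v‖`, the norm of `u` cannot exceed `1 - δ`.
-/

lemma add_le_add_of_concaveOn {𝕜 : Type*} [Field 𝕜] [LinearOrder 𝕜] [IsStrictOrderedRing 𝕜]
    {f : 𝕜 → 𝕜} {s : Set 𝕜} {x y z w : 𝕜} (hf : ConcaveOn 𝕜 s f) (hx : x ∈ s) (hw : w ∈ s)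
    (hxy : x ≤ y) (hxz : x ≤ z) (h : y + z = x + w) : f x + f w ≤ f y + f z := by
  have hy : y ∈ segment 𝕜 x w := Icc_subset_segment ⟨hxy, by linarith⟩
  obtain ⟨a, b, ha, hb, hab, rfl⟩ := hy
  obtain rfl : z = b • x + a • w := by
    simp only [smul_eq_mul] at h ⊢
    linear_combination h - (x + w) * hab
  have hfy := hf.2 hx hw ha hb hab
  have hfz := hf.2 hx hw hb ha (by rwa [add_comm])
  simp only [smul_eq_mul] at hfy hfz ⊢
  linear_combination hfy + hfz - (f x + f w) * hab

lemma rpow_add_rpow_le {q x y z w : ℝ} (hq0 : 0 ≤ q) (hq1 : q ≤ 1) (hx : 0 ≤ x) (hxy : x ≤ y)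
    (hxz : x ≤ z) (h : y + z = x + w) : x ^ q + w ^ q ≤ y ^ q + z ^ q :=
  add_le_add_of_concaveOn (Real.concaveOn_rpow hq0 hq1) (mem_Ici.2 hx)
    (mem_Ici.2 (by linarith)) hxy hxz h

/-- The odd extension `sgn x * |x| ^ q` of the power function. -/
noncomputable def signedRPow (q x : ℝ) : ℝ := |x| ^ (q - 1) * x

section SignedRPow

variable {p q x : ℝ}

lemma signedRPow_neg (q x : ℝ) : signedRPow q (-x) = -signedRPow q x := by
  simp only [signedRPow, abs_neg, mul_neg]

lemma signedRPow_of_nonneg (hq : q ≠ 0) (hx : 0 ≤ x) : signedRPow q x = x ^ q := by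
  rw [signedRPow, abs_of_nonneg hx, ← Real.rpow_add_one' hx (by simpa using hq), sub_add_cancel]

lemma signedRPow_mul {c : ℝ} (hq : q ≠ 0) (hc : 0 ≤ c) (x : ℝ) :
    signedRPow q (c * x) = c ^ q * signedRPow q x := by
  rw [← signedRPow_of_nonneg hq hc]
  simp only [signedRPow, abs_mul, Real.mul_rpow (abs_nonneg _) (abs_nonneg _)]
  ring

lemma mul_signedRPow_sub_one (hp : p ≠ 0) (x : ℝ) : x * signedRPow (p - 1) x = |x| ^ p := by
  rcases eq_or_ne x 0 with rfl | hx
  · simp [Real.zero_rpow hp]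
  · rw [signedRPow, ← sub_add_cancel p 2, Real.rpow_add (abs_pos.2 hx), Real.rpow_two, sq_abs]
    ring_nf

lemma strictMono_signedRPow (hq : 0 < q) : StrictMono (signedRPow q) := by
  refine strictMono_of_odd_strictMonoOn_nonneg (signedRPow_neg q) ?_
  exact (Real.strictMonoOn_rpow_Ici_of_exponent_pos hq).congr
    fun x hx => (signedRPow_of_nonneg hq.ne' hx).symm

lemma hasDerivAt_abs_rpow_signedRPow (hp : 1 < p) (x : ℝ) :
    HasDerivAt (fun x : ℝ => |x| ^ p) (p * signedRPow (p - 1) x) x := by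
  refine (hasDerivAt_abs_rpow x hp).congr_deriv ?_
  rw [signedRPow]
  ring_nf

end SignedRPow

/-- The left side of Hanner's inequality for vectors of norms `x` and `y`. -/
noncomputable def hannerSum (p x y : ℝ) : ℝ := |x + y| ^ p + |x - y| ^ p

section HannerSum

variable {p x y : ℝ}

lemma hannerSum_comm (p x y : ℝ) : hannerSum p x y = hannerSum p y x := by
  rw [hannerSum, hannerSum, add_comm x y, abs_sub_comm]

lemma hannerSum_zero_left (p y : ℝ) : hannerSum p 0 y = 2 * |y| ^ p := by
  rw [hannerSum, zero_add, zero_sub, abs_neg, two_mul]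

lemma hannerSum_mul {c : ℝ} (hc : 0 ≤ c) (p x y : ℝ) :
    hannerSum p (c * x) (c * y) = c ^ p * hannerSum p x y := by
  simp only [hannerSum, ← mul_add, ← mul_sub, abs_mul, abs_of_nonneg hc,
    Real.mul_rpow hc (abs_nonneg _)]

lemma hasDerivAt_hannerSum (hp : 1 < p) (x y : ℝ) :
    HasDerivAt (fun x => hannerSum p x y)
      (p * (signedRPow (p - 1) (x + y) + signedRPow (p - 1) (x - y))) x := by
  rw [mul_add]
  exact ((hasDerivAt_abs_rpow_signedRPow hp (x + y)).comp_add_const x y).add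
    ((hasDerivAt_abs_rpow_signedRPow hp (x - y)).comp_sub_const x y)

lemma strictMonoOn_hannerSum_left (hp : 1 < p) (y : ℝ) :
    StrictMonoOn (fun x => hannerSum p x y) (Ici 0) := by
  refine strictMonoOn_of_deriv_pos (convex_Ici 0)
    (fun x _ => (hasDerivAt_hannerSum hp x y).continuousAt.continuousWithinAt) fun x hx => ?_
  rw [interior_Ici, mem_Ioi] at hx
  have hlt : signedRPow (p - 1) (y - x) < signedRPow (p - 1) (x + y) :=
    strictMono_signedRPow (by linarith) (by linarith)
  rw [(hasDerivAt_hannerSum hp x y).deriv, ← neg_sub y x, signedRPow_neg]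
  exact mul_pos (by linarith) (by linarith)

lemma monotoneOn_hannerSum_right (hp : 1 < p) (x : ℝ) : MonotoneOn (hannerSum p x) (Ici 0) :=
  (strictMonoOn_hannerSum_left hp x).monotoneOn.congr fun y _ => hannerSum_comm p y x

end HannerSum

/-- If `0 < A, C`, the function sending `(a ^ p, b ^ p)` to `hannerSum p a b` has partial
derivatives `hannerCoeff p (C / A)` and `hannerCoeff p (A / C)` at `(A ^ p, C ^ p)`. -/
noncomputable def hannerCoeff (p s : ℝ) : ℝ :=
  signedRPow (p - 1) (s + 1) - signedRPow (p - 1) (s - 1)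

section HannerCoeff

variable {p r s a b : ℝ}

lemma antitoneOn_hannerCoeff (hp1 : 1 < p) (hp2 : p ≤ 2) :
    AntitoneOn (hannerCoeff p) (Ici 0) := by
  have hq : p - 1 ≠ 0 := by linarith
  have h_le_one : AntitoneOn (hannerCoeff p) (Icc 0 1) := by
    rintro s ⟨hs0, hs1⟩ t ⟨-, ht1⟩ hst
    rw [hannerCoeff, hannerCoeff, ← neg_sub 1 t, ← neg_sub 1 s, signedRPow_neg, signedRPow_neg]
    iterate 4 rw [signedRPow_of_nonneg hq (by linarith)]
    have h : (1 - t) ^ (p - 1) + (t + 1) ^ (p - 1) ≤ (1 - s) ^ (p - 1) + (s + 1) ^ (p - 1) :=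
      rpow_add_rpow_le (by linarith) (by linarith) (by linarith) (by linarith) (by linarith)
        (by ring)
    linarith
  have h_one_le : AntitoneOn (hannerCoeff p) (Ici 1) := by
    intro s hs t ht hst
    rw [mem_Ici] at hs ht
    rw [hannerCoeff, hannerCoeff]
    iterate 4 rw [signedRPow_of_nonneg hq (by linarith)]
    have h : (s - 1) ^ (p - 1) + (t + 1) ^ (p - 1) ≤ (t - 1) ^ (p - 1) + (s + 1) ^ (p - 1) :=
      rpow_add_rpow_le (by linarith) (by linarith) (by linarith) (by linarith) (by linarith)
        (by ring)
    linarith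
  simpa only [Icc_union_Ici_eq_Ici zero_le_one] using
    h_le_one.union_right h_one_le (isGreatest_Icc zero_le_one) isLeast_Ici

lemma hannerCoeff_le_two (hp1 : 1 < p) (hp2 : p ≤ 2) (hs : 0 ≤ s) : hannerCoeff p s ≤ 2 := by
  have h_zero : hannerCoeff p 0 = 2 := by norm_num [hannerCoeff, signedRPow]
  exact h_zero ▸ antitoneOn_hannerCoeff hp1 hp2 self_mem_Ici hs hs

lemma rpow_mul_hannerCoeff_inv (hp : p ≠ 1) (hr : 0 < r) :
    r ^ (p - 1) * hannerCoeff p r⁻¹ = signedRPow (p - 1) (r + 1) + signedRPow (p - 1) (r - 1) := by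
  have hq : p - 1 ≠ 0 := sub_ne_zero.2 hp
  rw [hannerCoeff, mul_sub, ← signedRPow_mul hq hr.le, ← signedRPow_mul hq hr.le, mul_add, mul_sub,
    mul_inv_cancel₀ hr.ne', mul_one, ← neg_sub r 1, signedRPow_neg, add_comm 1 r, sub_neg_eq_add]

lemma hannerCoeff_inv_mul_rpow_add (hp : 1 < p) (hr : 0 < r) :
    hannerCoeff p r⁻¹ * r ^ p + hannerCoeff p r = hannerSum p r 1 := by
  have hpow : r ^ p = r * r ^ (p - 1) := by
    rw [← Real.rpow_one_add' hr.le (by linarith), add_sub_cancel]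
  have h_coeff : hannerCoeff p r = signedRPow (p - 1) (r + 1) - signedRPow (p - 1) (r - 1) := rfl
  have hp0 : p ≠ 0 := by linarith
  rw [hannerSum, ← mul_signedRPow_sub_one hp0, ← mul_signedRPow_sub_one hp0, hpow]
  linear_combination r * rpow_mul_hannerCoeff_inv hp.ne' hr + h_coeff

lemma exists_hannerSum_sub_eq (hp : 1 < p) (ha : 0 ≤ a) (hab : a < b) :
    ∃ c ∈ Ioo a b,
      hannerSum p b 1 - hannerSum p a 1 = hannerCoeff p c⁻¹ * (b ^ p - a ^ p) := by
  have hderiv (x : ℝ) : HasDerivAt (fun x : ℝ => x ^ p) (p * x ^ (p - 1)) x :=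
    Real.hasDerivAt_rpow_const (Or.inr hp.le)
  obtain ⟨c, hc, h⟩ := exists_ratio_hasDerivAt_eq_ratio_slope _ _ hab
    (fun x _ => (hasDerivAt_hannerSum hp x 1).continuousAt.continuousWithinAt)
    (fun x _ => hasDerivAt_hannerSum hp x 1) _ _
    (fun x _ => (hderiv x).continuousAt.continuousWithinAt) (fun x _ => hderiv x)
  have hc0 : 0 < c := ha.trans_lt hc.1
  have hne : p * c ^ (p - 1) ≠ 0 := (mul_pos (by linarith) (Real.rpow_pos_of_pos hc0 _)).ne'
  refine ⟨c, hc, mul_right_cancel₀ hne ?_⟩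
  rw [← h, ← rpow_mul_hannerCoeff_inv hp.ne' hc0]
  ring

lemma hannerSum_add_hannerCoeff_mul_le (hp1 : 1 < p) (hp2 : p ≤ 2) (hr : 0 < r) (hs : 0 ≤ s) :
    hannerSum p r 1 + hannerCoeff p r⁻¹ * (s ^ p - r ^ p) ≤ hannerSum p s 1 := by
  have hanti {x y : ℝ} (hx : 0 < x) (hxy : x ≤ y) : hannerCoeff p x⁻¹ ≤ hannerCoeff p y⁻¹ :=
    antitoneOn_hannerCoeff hp1 hp2 (inv_nonneg.2 (hx.le.trans hxy)) (inv_nonneg.2 hx.le)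
      (inv_anti₀ hx hxy)
  have hp0 : 0 ≤ p := by linarith
  rcases lt_trichotomy s r with hsr | rfl | hrs
  · obtain ⟨c, hc, h⟩ := exists_hannerSum_sub_eq hp1 hs hsr
    have hpow : 0 ≤ r ^ p - s ^ p := sub_nonneg.2 (Real.rpow_le_rpow hs hsr.le hp0)
    linarith [mul_le_mul_of_nonneg_right (hanti (hs.trans_lt hc.1) hc.2.le) hpow]
  · rw [sub_self, mul_zero, add_zero]
  · obtain ⟨c, hc, h⟩ := exists_hannerSum_sub_eq hp1 hr.le hrs
    have hpow : 0 ≤ s ^ p - r ^ p := sub_nonneg.2 (Real.rpow_le_rpow hr.le hrs.le hp0)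
    linarith [mul_le_mul_of_nonneg_right (hanti hr hc.1.le) hpow]

lemma hannerCoeff_mul_rpow_add_le (hp1 : 1 < p) (hp2 : p ≤ 2) (hr : 0 < r) (ha : 0 ≤ a)
    (hb : 0 ≤ b) :
    hannerCoeff p r⁻¹ * a ^ p + hannerCoeff p r * b ^ p ≤ hannerSum p a b := by
  rcases hb.eq_or_lt with rfl | hb
  · rw [Real.zero_rpow (by linarith), mul_zero, add_zero, hannerSum_comm, hannerSum_zero_left,
      abs_of_nonneg ha]
    exact mul_le_mul_of_nonneg_right (hannerCoeff_le_two hp1 hp2 (inv_nonneg.2 hr.le))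
      (Real.rpow_nonneg ha p)
  · have hab : b * (a / b) = a := mul_div_cancel₀ a hb.ne'
    have h_tangent := hannerSum_add_hannerCoeff_mul_le hp1 hp2 hr (div_nonneg ha hb.le)
    calc hannerCoeff p r⁻¹ * a ^ p + hannerCoeff p r * b ^ p
        = b ^ p * (hannerSum p r 1 + hannerCoeff p r⁻¹ * ((a / b) ^ p - r ^ p)) := by
          rw [← hannerCoeff_inv_mul_rpow_add hp1 hr]
          nth_rw 1 [← hab]
          rw [Real.mul_rpow hb.le (div_nonneg ha hb.le)]
          ring
      _ ≤ b ^ p * hannerSum p (a / b) 1 :=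
          mul_le_mul_of_nonneg_left h_tangent (Real.rpow_nonneg hb.le p)
      _ = hannerSum p a b := by rw [← hannerSum_mul hb.le, hab, mul_one]

end HannerCoeff

lemma two_mul_rpow_le_hannerSum {p a b : ℝ} (hp : 1 < p) (ha : 0 ≤ a) (hb : 0 ≤ b) :
    2 * b ^ p ≤ hannerSum p a b := by
  rw [← abs_of_nonneg hb, ← hannerSum_zero_left, abs_of_nonneg hb]
  exact (strictMonoOn_hannerSum_left hp b).monotoneOn self_mem_Ici ha ha

lemma exists_hannerSum_eq_and_le {p A C : ℝ} (hp1 : 1 < p) (hp2 : p ≤ 2) (hA : 0 ≤ A)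
    (hC : 0 ≤ C) :
    ∃ α β : ℝ, hannerSum p A C = α * A ^ p + β * C ^ p ∧
      ∀ a b : ℝ, 0 ≤ a → 0 ≤ b → α * a ^ p + β * b ^ p ≤ hannerSum p a b := by
  rcases hA.eq_or_lt with rfl | hA'
  · refine ⟨0, 2, by simp [hannerSum_zero_left, abs_of_nonneg hC], fun a b ha hb => ?_⟩
    simpa only [zero_mul, zero_add] using two_mul_rpow_le_hannerSum hp1 ha hb
  rcases hC.eq_or_lt with rfl | hC'
  · refine ⟨2, 0, by simp [hannerSum_comm p A 0, hannerSum_zero_left, abs_of_nonneg hA],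
      fun a b ha hb => ?_⟩
    simpa only [zero_mul, add_zero, hannerSum_comm p a b] using
      two_mul_rpow_le_hannerSum hp1 hb ha
  refine ⟨hannerCoeff p (A / C)⁻¹, hannerCoeff p (A / C), ?_,
    fun a b => hannerCoeff_mul_rpow_add_le hp1 hp2 (div_pos hA' hC')⟩
  have hAC : C * (A / C) = A := mul_div_cancel₀ A hC'.ne'
  calc hannerSum p A C = C ^ p * hannerSum p (A / C) 1 := by
        rw [← hannerSum_mul hC, hAC, mul_one]
    _ = hannerCoeff p (A / C)⁻¹ * (C ^ p * (A / C) ^ p) + hannerCoeff p (A / C) * C ^ p := by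
        rw [← hannerCoeff_inv_mul_rpow_add hp1 (div_pos hA' hC')]
        ring
    _ = hannerCoeff p (A / C)⁻¹ * A ^ p + hannerCoeff p (A / C) * C ^ p := by
        rw [← Real.mul_rpow hC (div_nonneg hA hC), hAC]

lemma abs_rpow_eq_sq_rpow_half (x p : ℝ) : |x| ^ p = (x ^ 2) ^ (p / 2) := by
  rw [← sq_abs, ← Real.rpow_natCast_mul (abs_nonneg x)]
  norm_num [mul_div_cancel₀]

lemma hannerSum_norm_le {E : Type*} [NormedAddCommGroup E] [InnerProductSpace ℝ E] {p : ℝ}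
    (hp0 : 0 ≤ p) (hp2 : p ≤ 2) (a b : E) :
    hannerSum p ‖a‖ ‖b‖ ≤ ‖a + b‖ ^ p + ‖a - b‖ ^ p := by
  have h_sub : (‖a‖ - ‖b‖) ^ 2 ≤ ‖a - b‖ ^ 2 := sq_le_sq.2 <| by
    simpa only [abs_norm] using abs_norm_sub_norm_le a b
  have h_add : (‖a‖ - ‖b‖) ^ 2 ≤ ‖a + b‖ ^ 2 := sq_le_sq.2 <| by
    simpa only [abs_norm, norm_neg, sub_neg_eq_add] using abs_norm_sub_norm_le a (-b)
  have h_parallelogram : ‖a + b‖ ^ 2 + ‖a - b‖ ^ 2 = (‖a‖ - ‖b‖) ^ 2 + (‖a‖ + ‖b‖) ^ 2 := by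
    linear_combination parallelogram_law_with_norm ℝ a b
  have h := rpow_add_rpow_le (q := p / 2) (by linarith) (by linarith) (sq_nonneg _) h_add h_sub
    h_parallelogram
  simpa only [← abs_rpow_eq_sq_rpow_half, abs_norm, hannerSum, add_comm] using h

section Lp

variable {α E : Type*} [MeasurableSpace α] {μ : Measure α} [NormedAddCommGroup E] {p : ℝ}

lemma integrable_norm_rpow_iff_memLp {f : α → E} (hf : AEStronglyMeasurable f μ) (hp : 0 < p) :
    Integrable (fun x => ‖f x‖ ^ p) μ ↔ MemLp f (.ofReal p) μ := by
  rw [← integrable_norm_rpow_iff hf (by simpa using hp) ENNReal.ofReal_ne_top,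
    ENNReal.toReal_ofReal hp.le]

lemma integral_norm_rpow_nonneg (f : α → E) (p : ℝ) : 0 ≤ ∫ x, ‖f x‖ ^ p ∂μ :=
  integral_nonneg fun _ => Real.rpow_nonneg (norm_nonneg _) p

lemma integral_norm_smul_rpow_rpow_one_div [NormedSpace ℝ E] (f : α → E) (c : ℝ) (hp : p ≠ 0) :
    (∫ x, ‖c • f x‖ ^ p ∂μ) ^ (1 / p) = |c| * (∫ x, ‖f x‖ ^ p ∂μ) ^ (1 / p) := by
  simp only [norm_smul, Real.norm_eq_abs, Real.mul_rpow (abs_nonneg c) (norm_nonneg _),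
    integral_const_mul]
  rw [Real.mul_rpow (Real.rpow_nonneg (abs_nonneg c) p) (integral_norm_rpow_nonneg f p), one_div,
    Real.rpow_rpow_inv (abs_nonneg c) hp]

variable [InnerProductSpace ℝ E]

theorem hanner_inequality (hp1 : 1 < p) (hp2 : p ≤ 2) {u v : α → E}
    (hu : MemLp u (.ofReal p) μ) (hv : MemLp v (.ofReal p) μ) :
    hannerSum p ((∫ x, ‖u x‖ ^ p ∂μ) ^ (1 / p)) ((∫ x, ‖v x‖ ^ p ∂μ) ^ (1 / p)) ≤
      ∫ x, ‖u x + v x‖ ^ p ∂μ + ∫ x, ‖u x - v x‖ ^ p ∂μ := by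
  have hp0 : 0 < p := by linarith
  have h_int {h : α → E} (hh : MemLp h (.ofReal p) μ) : Integrable (fun x => ‖h x‖ ^ p) μ :=
    (integrable_norm_rpow_iff_memLp hh.1 hp0).2 hh
  have h_root (h : α → E) : ((∫ x, ‖h x‖ ^ p ∂μ) ^ (1 / p)) ^ p = ∫ x, ‖h x‖ ^ p ∂μ := by
    rw [one_div, Real.rpow_inv_rpow (integral_norm_rpow_nonneg h p) hp0.ne']
  have h_root_nonneg (h : α → E) : 0 ≤ (∫ x, ‖h x‖ ^ p ∂μ) ^ (1 / p) :=
    Real.rpow_nonneg (integral_norm_rpow_nonneg h p) _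
  obtain ⟨a, b, h_eq, h_le⟩ :=
    exists_hannerSum_eq_and_le hp1 hp2 (h_root_nonneg u) (h_root_nonneg v)
  rw [h_eq, h_root, h_root, ← integral_const_mul, ← integral_const_mul,
    ← integral_add ((h_int hu).const_mul a) ((h_int hv).const_mul b)]
  refine (integral_mono (((h_int hu).const_mul a).add ((h_int hv).const_mul b))
    ((h_int (hu.add hv)).add (h_int (hu.sub hv))) fun x => ?_).trans_eq
      (integral_add (h_int (hu.add hv)) (h_int (hu.sub hv)))
  exact (h_le _ _ (norm_nonneg _) (norm_nonneg _)).trans (hannerSum_norm_le hp0.le hp2 (u x) (v x))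

theorem uniform_convexity_lt_two_general {ε δ : ℝ} (hp1 : 1 < p) (hp2 : p ≤ 2) (hε : 0 ≤ ε)
    (hδ1 : δ ≤ 1) (hδ : (1 - δ + ε / 2) ^ p + |1 - δ - ε / 2| ^ p = 2) {f g : α → E}
    (hfp : MemLp f (.ofReal p) μ) (hgp : MemLp g (.ofReal p) μ)
    (hf : (∫ x, ‖f x‖ ^ p ∂μ) ^ (1 / p) ≤ 1) (hg : (∫ x, ‖g x‖ ^ p ∂μ) ^ (1 / p) ≤ 1)
    (hfg : ε ≤ (∫ x, ‖f x - g x‖ ^ p ∂μ) ^ (1 / p)) :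
    (∫ x, ‖(2⁻¹ : ℝ) • (f x + g x)‖ ^ p ∂μ) ^ (1 / p) ≤ 1 - δ := by
  have hp0 : 0 < p := by linarith
  set U := (∫ x, ‖(2⁻¹ : ℝ) • (f x + g x)‖ ^ p ∂μ) ^ (1 / p)
  set V := (∫ x, ‖(2⁻¹ : ℝ) • (f x - g x)‖ ^ p ∂μ) ^ (1 / p) with hV
  have hU0 : 0 ≤ U := Real.rpow_nonneg (integral_norm_rpow_nonneg _ p) _
  have hε_half : 0 ≤ ε / 2 := by linarith
  have h_half : ε / 2 ≤ V := by
    rw [hV, integral_norm_smul_rpow_rpow_one_div _ _ hp0.ne', abs_of_pos (by norm_num)]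
    linarith
  have h_integral {h : α → E} (hh : (∫ x, ‖h x‖ ^ p ∂μ) ^ (1 / p) ≤ 1) :
      ∫ x, ‖h x‖ ^ p ∂μ ≤ 1 := by
    rwa [one_div, Real.rpow_inv_le_iff_of_pos (integral_norm_rpow_nonneg h p) zero_le_one hp0,
      Real.one_rpow] at hh
  have h_hanner : hannerSum p U V ≤ ∫ x, ‖f x‖ ^ p ∂μ + ∫ x, ‖g x‖ ^ p ∂μ := by
    have h_add (x : α) : (2⁻¹ : ℝ) • (f x + g x) + (2⁻¹ : ℝ) • (f x - g x) = f x := by module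
    have h_sub (x : α) : (2⁻¹ : ℝ) • (f x + g x) - (2⁻¹ : ℝ) • (f x - g x) = g x := by module
    simpa only [Pi.smul_apply, Pi.add_apply, Pi.sub_apply, h_add, h_sub] using
      hanner_inequality hp1 hp2 ((hfp.add hgp).const_smul (2⁻¹ : ℝ))
        ((hfp.sub hgp).const_smul (2⁻¹ : ℝ))
  have h_le : hannerSum p U (ε / 2) ≤ hannerSum p (1 - δ) (ε / 2) :=
    calc hannerSum p U (ε / 2) ≤ hannerSum p U V :=
          monotoneOn_hannerSum_right hp1 U hε_half (hε_half.trans h_half) h_half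
      _ ≤ 2 := by linarith [h_integral hf, h_integral hg]
      _ = hannerSum p (1 - δ) (ε / 2) := by rw [hannerSum, abs_of_nonneg (by linarith), hδ]
  exact ((strictMonoOn_hannerSum_left hp1 (ε / 2)).le_iff_le hU0 (sub_nonneg.2 hδ1)).1 h_le

end Lp

/-- Uniform convexity of `L^p([0,1])` for `1 < p < 2`: if `δ ∈ [0,1]` solves
`(1 − δ + ε/2)^p + |1 − δ − ε/2|^p = 2`, and `‖f‖_p = ‖g‖_p = 1` with `‖f−g‖_p ≥ ε`,
then `‖(f+g)/2‖_p ≤ 1 − δ`. Here `‖h‖_p = (∫₀¹ |h|^p)^{1/p}`. -/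
theorem uniform_convexity_lt_two (p ε δ : ℝ) (hp1 : 1 < p) (hp2 : p < 2)
    (hε0 : 0 < ε) (hε2 : ε ≤ 2) (hδ0 : 0 ≤ δ) (hδ1 : δ ≤ 1)
    (hδ : (1 - δ + ε/2) ^ p + |1 - δ - ε/2| ^ p = 2)
    (f g : ℝ → ℝ) (hfm : Measurable f) (hgm : Measurable g)
    (hfi : IntegrableOn (fun t => |f t| ^ p) (Icc 0 1))
    (hgi : IntegrableOn (fun t => |g t| ^ p) (Icc 0 1))
    (hf : (∫ t in Icc (0:ℝ) 1, |f t| ^ p) ^ (1/p) = 1)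
    (hg : (∫ t in Icc (0:ℝ) 1, |g t| ^ p) ^ (1/p) = 1)
    (hfg : ε ≤ (∫ t in Icc (0:ℝ) 1, |f t - g t| ^ p) ^ (1/p)) :
    (∫ t in Icc (0:ℝ) 1, |(f t + g t) / 2| ^ p) ^ (1/p) ≤ 1 - δ := by
  have hfp := (integrable_norm_rpow_iff_memLp hfm.aestronglyMeasurable (by linarith)).1 hfi
  have hgp := (integrable_norm_rpow_iff_memLp hgm.aestronglyMeasurable (by linarith)).1 hgi
  simpa [div_eq_inv_mul] using
    uniform_convexity_lt_two_general hp1 hp2.le hε0.le hδ1 hδ hfp hgp hf.le hg.le hfg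
end
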